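/- arXiv:2510.21334 — 2 statements merged into one kernel-verified Lean document; each statement's English description precedes it below -/
import Mathlib

section
/- Let g ≥ 2 and let Γ_g be the fundamental group of the closed orientable surface of genus g, presented as ⟨a₁, b₁, …, a_g, b_g | [a₁,b₁][a₂,b₂]⋯[a_g,b_g]⟩. Then Γ_g admits a faithful, properly discontinuous action on ℝ⁶ by affine transformations. (Danciger–Guéritaud–Kassel: every closed hyperbolic surface group admits a proper affine action on ℝ⁶ ≅ 𝔰𝔩(2,ℂ).) -/
open scoped commutatorElement

/-- The surface relator `[a₁,b₁][a₂,b₂]⋯[a_g,b_g]` in the free group on generators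
`a₁, b₁, …, a_g, b_g` (the `a`'s indexed by `Sum.inl`, the `b`'s by `Sum.inr`). -/
def surfaceRelator (g : ℕ) : FreeGroup (Fin g ⊕ Fin g) :=
  (List.ofFn fun i : Fin g =>
    ⁅(FreeGroup.of (Sum.inl i) : FreeGroup (Fin g ⊕ Fin g)), FreeGroup.of (Sum.inr i)⁆).prod

/-- The fundamental group of the closed orientable surface of genus `g`, presented as
`⟨a₁, b₁, …, a_g, b_g | [a₁,b₁][a₂,b₂]⋯[a_g,b_g]⟩`. -/
abbrev SurfaceGroup (g : ℕ) : Type :=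
  PresentedGroup ({surfaceRelator g} : Set (FreeGroup (Fin g ⊕ Fin g)))


namespace SurfAff

set_option linter.unusedSimpArgs false

section Grp
variable {G : Type*} [Group G]

/-- partial products of commutators -/
def Zs (a b : ℕ → G) : ℕ → G
  | 0 => 1
  | n + 1 => Zs a b n * ⁅a n, b n⁆

/-- reversed partial products of the second generators -/
def Rs (b : ℕ → G) : ℕ → G
  | 0 => 1
  | n + 1 => b n * Rs b n

lemma prod_ofFn_comm (a b : ℕ → G) (n : ℕ) :
    (List.ofFn fun i : Fin n => ⁅a i, b i⁆).prod = Zs a b n := by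
  induction n with
  | zero => simp [Zs]
  | succ n ih =>
    rw [List.ofFn_succ', List.concat_eq_append, List.prod_append]
    simp only [Fin.val_castSucc, Fin.val_last, List.prod_cons, List.prod_nil, mul_one]
    rw [ih, Zs]

lemma map_Zs {H : Type*} [Group H] (f : G →* H) (a b : ℕ → G) (n : ℕ) :
    f (Zs a b n) = Zs (fun k => f (a k)) (fun k => f (b k)) n := by
  induction n with
  | zero => simp [Zs]
  | succ n ih => simp [Zs, ih, map_commutatorElement]

lemma Zs_congr {a b a' b' : ℕ → G} (n : ℕ) (ha : ∀ k < n, a k = a' k) (hb : ∀ k < n, b k = b' k) :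
    Zs a b n = Zs a' b' n := by
  induction n with
  | zero => simp [Zs]
  | succ n ih =>
    rw [Zs, Zs, ih (fun k hk => ha k (by omega)) (fun k hk => hb k (by omega)), ha n (by omega),
      hb n (by omega)]

lemma map_Rs {H : Type*} [Group H] (f : G →* H) (b : ℕ → G) (n : ℕ) :
    f (Rs b n) = Rs (fun k => f (b k)) n := by
  induction n with
  | zero => simp [Rs]
  | succ n ih => simp [Rs, ih]

lemma Rs_congr {b b' : ℕ → G} (n : ℕ) (hb : ∀ k < n, b k = b' k) :
    Rs b n = Rs b' n := by
  induction n with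
  | zero => simp [Rs]
  | succ n ih =>
    rw [Rs, Rs, ih (fun k hk => hb k (by omega)), hb n (by omega)]

/-- universal property -/
noncomputable def liftS (g : ℕ) (A B : ℕ → G) (h : Zs A B g = 1) : SurfaceGroup g →* G :=
  PresentedGroup.toGroup (f := Sum.elim (fun i : Fin g => A i) (fun i : Fin g => B i)) (by
    intro r hr
    rw [Set.mem_singleton_iff] at hr
    subst hr
    rw [surfaceRelator, map_list_prod, List.map_ofFn, ← h, ← prod_ofFn_comm]
    congr 2
    funext i
    simp [map_commutatorElement])

end Grp

noncomputable def sa (g n : ℕ) : SurfaceGroup g :=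
  if h : n < g then PresentedGroup.of (Sum.inl ⟨n, h⟩) else 1
noncomputable def sb (g n : ℕ) : SurfaceGroup g :=
  if h : n < g then PresentedGroup.of (Sum.inr ⟨n, h⟩) else 1

lemma liftS_a {G : Type*} [Group G] (g : ℕ) (A B : ℕ → G) (h : Zs A B g = 1) {n : ℕ} (hn : n < g) :
    liftS g A B h (sa g n) = A n := by
  simp only [sa, hn, dif_pos, liftS]
  erw [PresentedGroup.toGroup.of]
  simp

lemma liftS_b {G : Type*} [Group G] (g : ℕ) (A B : ℕ → G) (h : Zs A B g = 1) {n : ℕ} (hn : n < g) :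
    liftS g A B h (sb g n) = B n := by
  simp only [sb, hn, dif_pos, liftS]
  erw [PresentedGroup.toGroup.of]
  simp

lemma homS_ext {G : Type*} [Group G] {g : ℕ} {f f' : SurfaceGroup g →* G}
    (ha : ∀ n < g, f (sa g n) = f' (sa g n)) (hb : ∀ n < g, f (sb g n) = f' (sb g n)) : f = f' := by
  apply PresentedGroup.ext
  rintro (⟨n, hn⟩ | ⟨n, hn⟩)
  · have := ha n hn
    simpa [sa, hn] using this
  · have := hb n hn
    simpa [sb, hn] using this

lemma Zs_rel (g : ℕ) : Zs (sa g) (sb g) g = 1 := by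
  rw [← prod_ofFn_comm]
  have h : PresentedGroup.mk ({surfaceRelator g} : Set (FreeGroup (Fin g ⊕ Fin g)))
      ((List.ofFn fun i : Fin g => ⁅(FreeGroup.of (Sum.inl i) : FreeGroup (Fin g ⊕ Fin g)),
        FreeGroup.of (Sum.inr i)⁆).prod) = 1 :=
    PresentedGroup.one_of_mem (Set.mem_singleton _)
  refine Eq.trans ?_ h
  rw [map_list_prod, List.map_ofFn]
  congr 2
  funext i
  simp only [Function.comp, map_commutatorElement, sa, sb, i.2, dif_pos]
  rfl

section Theta
variable (g : ℕ)

local notation "ZZ" => Zs (sa g) (sb g)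
local notation "RR" => Rs (sb g)

lemma thx_rel (n : ℕ) : Zs (fun n => (RR n)⁻¹ * ZZ n * sa g n * RR n)
    (fun n => (RR (n+1))⁻¹ * RR n) n = (RR n)⁻¹ * (ZZ n)⁻¹ * RR n := by
  induction n with
  | zero => simp [Zs, Rs]
  | succ n ih =>
    rw [Zs, ih]
    simp only [Zs, Rs, commutatorElement_def]
    group

lemma thy_rel (n : ℕ) : Zs (fun n => ZZ n * (sa g n)⁻¹ * (ZZ n)⁻¹)
    (fun n => ZZ (n+1) * sb g n * (ZZ n)⁻¹) n = (ZZ n)⁻¹ := by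
  induction n with
  | zero => simp [Zs]
  | succ n ih =>
    rw [Zs, ih]
    simp only [Zs, commutatorElement_def]
    group

noncomputable def thx : SurfaceGroup g →* SurfaceGroup g :=
  liftS g (fun n => (RR n)⁻¹ * ZZ n * sa g n * RR n) (fun n => (RR (n+1))⁻¹ * RR n)
    (by rw [thx_rel, Zs_rel]; simp)

noncomputable def thy : SurfaceGroup g →* SurfaceGroup g :=
  liftS g (fun n => ZZ n * (sa g n)⁻¹ * (ZZ n)⁻¹) (fun n => ZZ (n+1) * sb g n * (ZZ n)⁻¹)
    (by rw [thy_rel, Zs_rel]; simp)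

variable {g}
lemma thx_a {n : ℕ} (hn : n < g) : thx g (sa g n) = (RR n)⁻¹ * ZZ n * sa g n * RR n :=
  liftS_a _ _ _ _ hn
lemma thx_b {n : ℕ} (hn : n < g) : thx g (sb g n) = (RR (n+1))⁻¹ * RR n :=
  liftS_b _ _ _ _ hn
lemma thy_a {n : ℕ} (hn : n < g) : thy g (sa g n) = ZZ n * (sa g n)⁻¹ * (ZZ n)⁻¹ :=
  liftS_a _ _ _ _ hn
lemma thy_b {n : ℕ} (hn : n < g) : thy g (sb g n) = ZZ (n+1) * sb g n * (ZZ n)⁻¹ :=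
  liftS_b _ _ _ _ hn

lemma thx_Z {n : ℕ} (hn : n ≤ g) : thx g (ZZ n) = (RR n)⁻¹ * (ZZ n)⁻¹ * RR n := by
  rw [map_Zs, ← thx_rel]
  exact Zs_congr n (fun k hk => thx_a (by omega)) (fun k hk => thx_b (by omega))

lemma thy_Z {n : ℕ} (hn : n ≤ g) : thy g (ZZ n) = (ZZ n)⁻¹ := by
  rw [map_Zs, ← thy_rel]
  exact Zs_congr n (fun k hk => thy_a (by omega)) (fun k hk => thy_b (by omega))

lemma thx_R {n : ℕ} (hn : n ≤ g) : thx g (RR n) = (RR n)⁻¹ := by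
  induction n with
  | zero => simp [Rs]
  | succ n ih =>
    conv_lhs => rw [Rs]
    rw [map_mul, ih (by omega), thx_b (by omega)]
    group

lemma thy_R {n : ℕ} (hn : n ≤ g) : thy g (RR n) = ZZ n * RR n := by
  induction n with
  | zero => simp [Rs, Zs]
  | succ n ih =>
    conv_lhs => rw [Rs]
    rw [map_mul, ih (by omega), thy_b (by omega), Rs]
    group

lemma thx_thx (x : SurfaceGroup g) : thx g (thx g x) = x := by
  have : (thx g).comp (thx g) = MonoidHom.id _ := by
    apply homS_ext
    · intro n hn
      simp only [MonoidHom.comp_apply, thx_a hn, map_mul, map_inv, thx_R hn.le, thx_Z hn.le,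
        MonoidHom.id_apply]
      group
    · intro n hn
      simp only [MonoidHom.comp_apply, thx_b hn, map_mul, map_inv, thx_R hn.le,
        thx_R (Nat.succ_le_of_lt hn), MonoidHom.id_apply, Rs]
      group
  exact DFunLike.congr_fun this x

lemma thy_thy (x : SurfaceGroup g) : thy g (thy g x) = x := by
  have : (thy g).comp (thy g) = MonoidHom.id _ := by
    apply homS_ext
    · intro n hn
      simp only [MonoidHom.comp_apply, thy_a hn, map_mul, map_inv, thy_Z hn.le,
        MonoidHom.id_apply]
      group
    · intro n hn
      simp only [MonoidHom.comp_apply, thy_b hn, map_mul, map_inv, thy_Z hn.le,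
        thy_Z (Nat.succ_le_of_lt hn), MonoidHom.id_apply]
      group
  exact DFunLike.congr_fun this x

lemma thx_thy (x : SurfaceGroup g) : thx g (thy g x) = thy g (thx g x) := by
  have : (thx g).comp (thy g) = (thy g).comp (thx g) := by
    apply homS_ext
    · intro n hn
      simp only [MonoidHom.comp_apply, thy_a hn, thx_a hn, map_mul, map_inv, thy_Z hn.le,
        thx_Z hn.le, thx_R hn.le, thy_R hn.le]
      group
    · intro n hn
      simp only [MonoidHom.comp_apply, thy_b hn, thx_b hn, map_mul, map_inv, thy_Z hn.le,
        thx_Z hn.le, thx_R hn.le, thy_R hn.le, thy_Z (Nat.succ_le_of_lt hn),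
        thx_Z (Nat.succ_le_of_lt hn), thx_R (Nat.succ_le_of_lt hn), thy_R (Nat.succ_le_of_lt hn)]
      group
  exact DFunLike.congr_fun this x

end Theta


/-! ### The right-angled polygon reflection group -/

/-- cyclic adjacency on the sides of the polygon -/
def Adj (g : ℕ) (i j : Fin (2 * g + 2)) : Prop :=
  j.val = i.val + 1 ∨ i.val = j.val + 1 ∨ (i.val = 0 ∧ j.val = 2 * g + 1) ∨
    (j.val = 0 ∧ i.val = 2 * g + 1)

lemma Adj.symm {g : ℕ} {i j : Fin (2 * g + 2)} (h : Adj g i j) : Adj g j i := by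
  unfold Adj at *; omega

lemma Adj.ne {g : ℕ} {i j : Fin (2 * g + 2)} (h : Adj g i j) : i ≠ j := by
  rintro rfl
  unfold Adj at h; omega

def relsW (g : ℕ) : Set (FreeGroup (Fin (2 * g + 2))) :=
  {r | (∃ i, r = FreeGroup.of i * FreeGroup.of i) ∨
    ∃ i j, Adj g i j ∧ r = ⁅FreeGroup.of i, FreeGroup.of j⁆}

abbrev W (g : ℕ) : Type := PresentedGroup (relsW g)

noncomputable def ws {g : ℕ} (i : Fin (2 * g + 2)) : W g := PresentedGroup.of i

lemma ws_sq {g : ℕ} (i : Fin (2 * g + 2)) : ws i * ws i = 1 := by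
  have : PresentedGroup.mk (relsW g) (FreeGroup.of i * FreeGroup.of i) = 1 :=
    PresentedGroup.one_of_mem (Or.inl ⟨i, rfl⟩)
  rw [map_mul] at this
  exact this

lemma ws_comm {g : ℕ} {i j : Fin (2 * g + 2)} (h : Adj g i j) : ws i * ws j = ws j * ws i := by
  have : PresentedGroup.mk (relsW g) ⁅FreeGroup.of i, FreeGroup.of j⁆ = 1 :=
    PresentedGroup.one_of_mem (Or.inr ⟨i, j, h, rfl⟩)
  rw [map_commutatorElement, commutatorElement_eq_one_iff_mul_comm] at this
  exact this

noncomputable def liftW {g : ℕ} {G : Type*} [Group G] (f : Fin (2 * g + 2) → G)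
    (h1 : ∀ i, f i * f i = 1) (h2 : ∀ i j, Adj g i j → f i * f j = f j * f i) : W g →* G :=
  PresentedGroup.toGroup (f := f) (by
    rintro r (⟨i, rfl⟩ | ⟨i, j, h, rfl⟩)
    · simp [h1]
    · rw [map_commutatorElement, commutatorElement_eq_one_iff_mul_comm]
      simpa using h2 i j h)

lemma liftW_ws {g : ℕ} {G : Type*} [Group G] (f : Fin (2 * g + 2) → G)
    (h1 : ∀ i, f i * f i = 1) (h2 : ∀ i j, Adj g i j → f i * f j = f j * f i)
    (i : Fin (2 * g + 2)) : liftW f h1 h2 (ws i) = f i :=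
  PresentedGroup.toGroup.of _

/-- odd sides -/
noncomputable def wX (g n : ℕ) : W g := if h : 2 * n + 1 < 2 * g + 2 then ws ⟨2 * n + 1, h⟩ else 1
/-- even sides -/
noncomputable def wY (g n : ℕ) : W g := if h : 2 * n < 2 * g + 2 then ws ⟨2 * n, h⟩ else 1

lemma wX_sq (g n : ℕ) : wX g n * wX g n = 1 := by
  unfold wX; split_ifs <;> simp [ws_sq]
lemma wY_sq (g n : ℕ) : wY g n * wY g n = 1 := by
  unfold wY; split_ifs <;> simp [ws_sq]
lemma wXY (g n : ℕ) : wX g n * wY g n = wY g n * wX g n := by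
  unfold wX wY
  split_ifs
  · exact ws_comm (by unfold Adj; simp)
  all_goals simp
lemma wXY' (g n : ℕ) : wX g n * wY g (n+1) = wY g (n+1) * wX g n := by
  unfold wX wY
  split_ifs
  · exact ws_comm (by unfold Adj; simp; omega)
  all_goals simp
lemma wXY0 (g : ℕ) : wX g g * wY g 0 = wY g 0 * wX g g := by
  unfold wX wY
  split_ifs
  · exact ws_comm (by unfold Adj; simp)
  all_goals simp

lemma phi_rel (g n : ℕ) :
    Zs (fun n => wX g n * wY g 0 * wX g n * wY g (n+1)) (fun n => wX g (n+1) * wX g n) n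
      = wY g 0 * (wX g n * wY g 0 * wX g n) := by
  induction n with
  | zero =>
    have h := wXY g 0
    rw [Zs, h, mul_assoc, wX_sq, mul_one, wY_sq]
  | succ n ih =>
    rw [Zs, ih, commutatorElement_def]
    have h1 := wX_sq g n
    have h2 := wX_sq g (n+1)
    have h3 := wY_sq g 0
    have h4 := wY_sq g (n+1)
    have h5 := wXY' g n
    have h6 := wXY g (n+1)
    generalize wX g n = x at *
    generalize wX g (n+1) = x' at *
    generalize wY g 0 = y at *
    generalize wY g (n+1) = y' at *
    have e1 : x⁻¹ = x := inv_eq_of_mul_eq_one_left h1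
    have e2 : x'⁻¹ = x' := inv_eq_of_mul_eq_one_left h2
    have e3 : y⁻¹ = y := inv_eq_of_mul_eq_one_left h3
    have e4 : y'⁻¹ = y' := inv_eq_of_mul_eq_one_left h4
    have e5 : ∀ z, x * (y' * z) = y' * (x * z) := fun z => by rw [← mul_assoc, h5, mul_assoc]
    have e6 : ∀ z, x' * (y' * z) = y' * (x' * z) := fun z => by rw [← mul_assoc, h6, mul_assoc]
    have s1 : ∀ z, x * (x * z) = z := fun z => by rw [← mul_assoc, h1, one_mul]
    have s2 : ∀ z, x' * (x' * z) = z := fun z => by rw [← mul_assoc, h2, one_mul]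
    have s3 : ∀ z, y * (y * z) = z := fun z => by rw [← mul_assoc, h3, one_mul]
    have s4 : ∀ z, y' * (y' * z) = z := fun z => by rw [← mul_assoc, h4, one_mul]
    simp only [mul_inv_rev, e1, e2, e3, e4, mul_assoc, s1, s2, s3, s4, e5, e6]

noncomputable def phi (g : ℕ) : SurfaceGroup g →* W g :=
  liftS g (fun n => wX g n * wY g 0 * wX g n * wY g (n+1)) (fun n => wX g (n+1) * wX g n) (by
    rw [phi_rel, wXY0, mul_assoc, wX_sq, mul_one, wY_sq])

section Psi
variable {g : ℕ}
local notation "ZZ" => Zs (sa g) (sb g)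
local notation "RR" => Rs (sb g)

noncomputable def PX (g n : ℕ) : Equiv.Perm (SurfaceGroup g) where
  toFun x := if n ≤ g then Rs (sb g) n * thx g x else x
  invFun x := if n ≤ g then Rs (sb g) n * thx g x else x
  left_inv x := by
    dsimp only
    split_ifs with h
    · rw [map_mul, thx_R h, thx_thx]; group
    · rfl
  right_inv x := by
    dsimp only
    split_ifs with h
    · rw [map_mul, thx_R h, thx_thx]; group
    · rfl

noncomputable def sq (g : ℕ) : ℕ → SurfaceGroup g
  | 0 => 1
  | n + 1 => Zs (sa g) (sb g) n * sa g n

lemma thy_sq {n : ℕ} (h : n ≤ g) : thy g (sq g n) = (sq g n)⁻¹ := by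
  cases n with
  | zero => simp [sq]
  | succ n => rw [sq, map_mul, thy_Z (by omega), thy_a (by omega)]; group

noncomputable def PY (g n : ℕ) : Equiv.Perm (SurfaceGroup g) where
  toFun x := if n ≤ g then thy g (sq g n * x) else x
  invFun x := if n ≤ g then thy g (sq g n * x) else x
  left_inv x := by
    dsimp only
    split_ifs with h
    · rw [map_mul, map_mul, thy_sq h, map_mul, map_inv, thy_sq h, thy_thy]; group
    · rfl
  right_inv x := by
    dsimp only
    split_ifs with h
    · rw [map_mul, map_mul, thy_sq h, map_mul, map_inv, thy_sq h, thy_thy]; group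
    · rfl

lemma PX_apply {n : ℕ} (h : n ≤ g) (x) : PX g n x = RR n * thx g x := if_pos h
lemma PY_apply {n : ℕ} (h : n ≤ g) (x) : PY g n x = thy g (sq g n) * thy g x := by
  rw [← map_mul]; exact if_pos h

lemma PX_sq (n : ℕ) : PX g n * PX g n = 1 := by
  ext1 x; exact (PX g n).left_inv x
lemma PY_sq (n : ℕ) : PY g n * PY g n = 1 := by
  ext1 x; exact (PY g n).left_inv x

lemma PXY {n : ℕ} (h : n ≤ g) : PX g n * PY g n = PY g n * PX g n := by
  ext1 x
  simp only [Equiv.Perm.mul_apply, PX_apply h, PY_apply h, map_mul, thy_R h, thy_sq h, thx_thy]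
  cases n with
  | zero => simp [sq, Rs, Zs]
  | succ n =>
    simp only [sq, map_inv, map_mul, thx_Z (show n ≤ g by omega), thx_a (show n < g by omega), Zs,
      Rs, commutatorElement_def]
    group

lemma PXY' {n : ℕ} (h : n + 1 ≤ g) : PX g n * PY g (n+1) = PY g (n+1) * PX g n := by
  ext1 x
  have h' : n ≤ g := by omega
  simp only [Equiv.Perm.mul_apply, PX_apply h', PY_apply h, map_mul, thy_R h', thy_sq h, thx_thy]
  simp only [sq, map_inv, map_mul, thx_Z (show n ≤ g by omega), thx_a (show n < g by omega), Zs,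
      Rs, commutatorElement_def]
  group

lemma PXY0 : PX g g * PY g 0 = PY g 0 * PX g g := by
  ext1 x
  simp only [Equiv.Perm.mul_apply, PX_apply le_rfl, PY_apply (Nat.zero_le g), map_mul,
    thy_R le_rfl, thx_thy, Zs_rel, sq, map_one, one_mul]

noncomputable def PS (g : ℕ) (i : Fin (2 * g + 2)) : Equiv.Perm (SurfaceGroup g) :=
  if i.val % 2 = 0 then PY g (i.val / 2) else PX g (i.val / 2)

lemma PS_even (n : ℕ) (h : 2 * n < 2 * g + 2) : PS g ⟨2 * n, h⟩ = PY g n := by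
  simp [PS]
lemma PS_odd (n : ℕ) (h : 2 * n + 1 < 2 * g + 2) : PS g ⟨2 * n + 1, h⟩ = PX g n := by
  have : (2 * n + 1) % 2 = 1 := by omega
  have h2 : (2 * n + 1) / 2 = n := by omega
  simp [PS, h2]

lemma PS_sq (i : Fin (2 * g + 2)) : PS g i * PS g i = 1 := by
  unfold PS; split_ifs
  · exact PY_sq _
  · exact PX_sq _

lemma PS_comm_aux (i j : Fin (2 * g + 2)) (h : j.val = i.val + 1 ∨ (j.val = 0 ∧ i.val = 2 * g + 1)) :
    PS g i * PS g j = PS g j * PS g i := by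
  obtain ⟨i, hi⟩ := i
  obtain ⟨j, hj⟩ := j
  simp only at h
  rcases h with rfl | ⟨rfl, rfl⟩
  · rcases Nat.even_or_odd' i with ⟨n, rfl | rfl⟩
    · rw [PS_even, PS_odd, PXY (by omega)]
    · have e : PS g ⟨2 * n + 1 + 1, hj⟩ = PY g (n + 1) := PS_even (n+1) (by omega)
      rw [PS_odd, e, PXY' (by omega)]
  · have e : PS g ⟨0, hj⟩ = PY g 0 := PS_even 0 (by omega)
    rw [PS_odd, e, PXY0]

lemma PS_comm (i j : Fin (2 * g + 2)) (h : Adj g i j) : PS g i * PS g j = PS g j * PS g i := by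
  rcases h with h | h | h | h
  · exact PS_comm_aux i j (Or.inl h)
  · exact (PS_comm_aux j i (Or.inl h)).symm
  · exact (PS_comm_aux j i (Or.inr h)).symm
  · exact PS_comm_aux i j (Or.inr h)

noncomputable def psi (g : ℕ) : W g →* Equiv.Perm (SurfaceGroup g) := liftW (PS g) PS_sq PS_comm

lemma psi_X {n : ℕ} (h : n ≤ g) : psi g (wX g n) = PX g n := by
  have h' : 2 * n + 1 < 2 * g + 2 := by omega
  rw [wX, dif_pos h', psi, liftW_ws, PS_odd]
lemma psi_Y {n : ℕ} (h : n ≤ g) : psi g (wY g n) = PY g n := by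
  have h' : 2 * n < 2 * g + 2 := by omega
  rw [wY, dif_pos h', psi, liftW_ws, PS_even]

/-- left multiplication -/
def Lm (g : ℕ) : SurfaceGroup g →* Equiv.Perm (SurfaceGroup g) :=
  MulAction.toPermHom (SurfaceGroup g) (SurfaceGroup g)

lemma psi_phi : (psi g).comp (phi g) = Lm g := by
  apply homS_ext
  · intro n hn
    rw [MonoidHom.comp_apply, phi, liftS_a _ _ _ _ hn, map_mul, map_mul, map_mul, psi_X hn.le,
      psi_Y (Nat.zero_le g), psi_Y (Nat.succ_le_of_lt hn)]
    ext1 x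
    have e : Lm g (sa g n) x = sa g n * x := rfl
    rw [e]
    simp only [Equiv.Perm.mul_apply, PX_apply hn.le, PY_apply (Nat.zero_le g),
      PY_apply (Nat.succ_le_of_lt hn), map_mul, thy_sq (Nat.succ_le_of_lt hn),
      thy_sq (Nat.zero_le g), thx_thy, thx_thx, thy_thy, thx_R hn.le, thy_R hn.le, thx_Z hn.le,
      thy_Z hn.le, map_inv]
    simp only [sq, map_one, map_mul, map_inv, thx_thx, thy_thy, thx_R hn.le, thy_R hn.le,
      thx_Z hn.le, thy_Z hn.le, thx_a hn, thy_a hn]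
    group
  · intro n hn
    rw [MonoidHom.comp_apply, phi, liftS_b _ _ _ _ hn, map_mul, psi_X hn.le,
      psi_X (Nat.succ_le_of_lt hn)]
    ext1 x
    have e : Lm g (sb g n) x = sb g n * x := rfl
    rw [e]
    simp only [Equiv.Perm.mul_apply, PX_apply hn.le, PX_apply (Nat.succ_le_of_lt hn), map_mul,
      thx_R hn.le, thx_thx, Rs]
    group

lemma phi_injective : Function.Injective (phi g) := by
  intro x y h
  have h1 := congrArg (psi g) h
  rw [← MonoidHom.comp_apply, ← MonoidHom.comp_apply, psi_phi] at h1
  have h2 := DFunLike.congr_fun h1 1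
  have e : ∀ z, Lm g z 1 = z := fun z => mul_one z
  rwa [e, e] at h2

end Psi


/-! ### Words and the numbers game -/

section Words
variable {S : Type*}

/-- left descent set of a word -/
def Dm (adj : S → S → Prop) : List S → S → Prop
  | [], _ => False
  | i :: w, j => j = i ∨ (Dm adj w j ∧ adj i j)

/-- reduced words -/
def Red (adj : S → S → Prop) : List S → Prop
  | [] => True
  | i :: w => Red adj w ∧ ¬ Dm adj w i

lemma Dm_clique {adj : S → S → Prop} (hs : ∀ i j, adj i j → adj j i) (w : List S) :
    ∀ i j, Dm adj w i → Dm adj w j → i ≠ j → adj i j := by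
  induction w with
  | nil => intro i j h; exact h.elim
  | cons a w ih =>
    rintro i j (rfl | ⟨h1, h2⟩) (rfl | ⟨h3, h4⟩) hne
    · exact (hne rfl).elim
    · exact h4
    · exact hs _ _ h2
    · exact ih i j h1 h3 hne

end Words

section WWords
variable {g : ℕ}

noncomputable def wprod (w : List (Fin (2 * g + 2))) : W g := (w.map ws).prod

lemma wprod_cons (i : Fin (2 * g + 2)) (w) : wprod (i :: w) = ws i * wprod w := by
  simp [wprod]

lemma ws_inv (i : Fin (2 * g + 2)) : (ws i)⁻¹ = (ws i : W g) :=
  inv_eq_of_mul_eq_one_left (ws_sq i)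

lemma wprod_reverse (w : List (Fin (2 * g + 2))) : wprod w.reverse = (wprod w)⁻¹ := by
  rw [wprod, wprod, List.prod_inv_reverse, List.map_reverse, List.map_map]
  congr 3
  funext i
  simp [ws_inv]

lemma exists_word (x : W g) : ∃ w, wprod w = x := by
  induction x using PresentedGroup.induction_on with
  | _ z =>
  induction z using FreeGroup.induction_on with
  | C1 => exact ⟨[], by simp [wprod]⟩
  | of i => exact ⟨[i], by simp [wprod]; rfl⟩
  | inv_of i h => 
    obtain ⟨w, hw⟩ := h
    exact ⟨w.reverse, by rw [wprod_reverse, hw, map_inv]⟩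
  | mul x y hx hy =>
    obtain ⟨w, hw⟩ := hx
    obtain ⟨w', hw'⟩ := hy
    refine ⟨w ++ w', ?_⟩
    rw [map_mul, ← hw, ← hw']
    simp [wprod]

lemma Dm_exch (w : List (Fin (2 * g + 2))) : ∀ i, Dm (Adj g) w i →
    ∃ w', w'.length + 1 = w.length ∧ wprod w = ws i * wprod w' := by
  induction w with
  | nil => intro i h; exact h.elim
  | cons a w ih =>
    rintro i (rfl | ⟨h1, h2⟩)
    · exact ⟨w, rfl, wprod_cons _ _⟩
    · obtain ⟨w', h3, h4⟩ := ih i h1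
      refine ⟨a :: w', by simp [h3], ?_⟩
      rw [wprod_cons, h4, wprod_cons, ← mul_assoc, ws_comm h2, mul_assoc]

def Mini (w : List (Fin (2 * g + 2))) : Prop := ∀ w', wprod w' = wprod w → w.length ≤ w'.length

lemma exists_mini (x : W g) : ∃ w, wprod w = x ∧ Mini w := by
  obtain ⟨w0, h0⟩ := exists_word x
  obtain ⟨n, hn⟩ : ∃ n, n = w0.length := ⟨_, rfl⟩
  induction n using Nat.strong_induction_on generalizing w0 with
  | _ n ih =>
    by_cases h : Mini w0
    · exact ⟨w0, h0, h⟩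
    · unfold Mini at h
      push Not at h
      obtain ⟨w', h1, h2⟩ := h
      exact ih _ (by omega) w' (h1.trans h0) rfl

lemma Mini.reverse {w : List (Fin (2 * g + 2))} (h : Mini w) : Mini w.reverse := by
  intro w' hw'
  have := h w'.reverse (by rw [wprod_reverse, hw', wprod_reverse, inv_inv])
  simpa using this

lemma Mini.red {w : List (Fin (2 * g + 2))} (h : Mini w) : Red (Adj g) w := by
  induction w with
  | nil => trivial
  | cons i w ih =>
    refine ⟨ih ?_, ?_⟩
    · intro w' hw'
      have := h (i :: w') (by rw [wprod_cons, wprod_cons, hw'])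
      simpa using this
    · intro hD
      obtain ⟨w', h1, h2⟩ := Dm_exch w i hD
      have := h w' (by rw [wprod_cons, h2, ← mul_assoc, ws_sq, one_mul])
      simp at this
      omega

lemma finite_short (n : ℕ) : {x : W g | ∃ w : List (Fin (2 * g + 2)), wprod w = x ∧ w.length ≤ n}.Finite := by
  have h := (List.finite_length_le (Fin (2 * g + 2)) n).image wprod
  refine h.subset ?_
  rintro x ⟨w, h1, h2⟩
  exact ⟨w, h2, h1⟩

end WWords


section Game
set_option linter.unusedSectionVars false
open Polynomial
variable {S : Type*} [Fintype S] [DecidableEq S]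

/-- real numbers game -/
def gu (b : S → S → ℝ) (r : ℝ) : List S → S → ℝ
  | [], _ => r
  | i :: w, j => gu b r w j + 2 * b i j * gu b r w i

/-- sum of fired values -/
def gs (b : S → S → ℝ) (r : ℝ) : List S → ℝ
  | [] => 0
  | i :: w => gs b r w + gu b r w i

/-- polynomial numbers game -/
noncomputable def gU (B β : S → S → ℝ) (r0 r1 : ℝ) : List S → S → ℝ[X]
  | [], _ => C r0 + C r1 * X
  | i :: w, j => gU B β r0 r1 w j + 2 * (C (B i j) + C (β i j) * X) * gU B β r0 r1 w i

noncomputable def gP (B β : S → S → ℝ) (r0 r1 : ℝ) : List S → ℝ[X]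
  | [] => 1
  | i :: w => gP B β r0 r1 w + 2 * gU B β r0 r1 w i

lemma gU_eval (B β : S → S → ℝ) (r0 r1 τ : ℝ) (w : List S) : ∀ j,
    (gU B β r0 r1 w j).eval τ = gu (fun i j => B i j + τ * β i j) (r0 + τ * r1) w j := by
  induction w with
  | nil => intro j; simp only [gU, gu, eval_add, eval_mul, eval_C, eval_X]; ring
  | cons i w ih =>
    intro j
    simp only [gU, gu, eval_add, eval_mul, eval_C, eval_X, eval_ofNat, ih]; ring

lemma gP_eval (B β : S → S → ℝ) (r0 r1 τ : ℝ) (w : List S) :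
    (gP B β r0 r1 w).eval τ = 1 + 2 * gs (fun i j => B i j + τ * β i j) (r0 + τ * r1) w := by
  induction w with
  | nil => simp [gP, gs]
  | cons i w ih => simp [gP, gs, ih, gU_eval]; ring

/-- invariant cone -/
def Cone (adj : S → S → Prop) (M : ℝ) (D : S → Prop) (u : S → ℝ) : Prop :=
  (∀ j, ¬ D j → 0 ≤ u j) ∧ ∀ d j, D d → ¬ D j → ¬ adj d j → M * |u d| ≤ u j


structure Good (adj : S → S → Prop) (b : S → S → ℝ) (M : ℝ) : Prop where
  symm : ∀ i j, adj i j → adj j i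
  irr : ∀ i, ¬ adj i i
  self : ∀ i, b i i = -1
  adj0 : ∀ i j, adj i j → b i j = 0
  big : ∀ i j, i ≠ j → ¬ adj i j → M + 1 ≤ 2 * b i j
  one : 1 ≤ M

section fire
variable {adj : S → S → Prop} {b : S → S → ℝ} {M : ℝ}

lemma Cone.aux (G : Good adj b M) {D : S → Prop} {u : S → ℝ}
    (hu : Cone adj M D u) {i : S} (hi : ¬ D i) {j : S} (hij : i ≠ j)
    (ha : ¬ adj i j) : M * u i ≤ u j + 2 * b i j * u i := by
  have hb := G.big i j hij ha
  have hM := G.one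
  have hui := hu.1 i hi
  have h1 : (M + 1) * u i ≤ 2 * b i j * u i := mul_le_mul_of_nonneg_right hb hui
  by_cases hD : D j
  · have h2 := hu.2 j i hD hi (fun h => ha (G.symm _ _ h))
    have h3 : |u j| ≤ M * |u j| := le_mul_of_one_le_left (abs_nonneg _) hM
    have h4 := neg_abs_le (u j)
    linarith
  · have h2 := hu.1 j hD
    linarith

lemma Cone.aux2 (G : Good adj b M) {D : S → Prop} {u : S → ℝ}
    (hu : Cone adj M D u) {i : S} (hi : ¬ D i) {j : S} (hij : i ≠ j) :
    u j ≤ u j + 2 * b i j * u i := by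
  have hui := hu.1 i hi
  by_cases ha : adj i j
  · simp [G.adj0 i j ha]
  have hb := G.big i j hij ha
  have hM := G.one
  have h1 : 0 ≤ 2 * b i j * u i := mul_nonneg (by linarith) hui
  linarith

/-- new descent predicate -/
def Dn (adj : S → S → Prop) (D : S → Prop) (i j : S) : Prop := j = i ∨ (D j ∧ adj i j)

lemma Cone.fire (G : Good adj b M) {D : S → Prop} (hcl : ∀ i j, D i → D j → i ≠ j → adj i j)
    {u : S → ℝ} (hu : Cone adj M D u) {i : S} (hi : ¬ D i) :
    Cone adj M (Dn adj D i) (fun j => u j + 2 * b i j * u i) := by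
  have hM := G.one
  have hui := hu.1 i hi
  constructor
  · intro j hj
    have hij : i ≠ j := fun h => hj (Or.inl h.symm)
    by_cases hD : D j
    · have ha : ¬ adj i j := fun h => hj (Or.inr ⟨hD, h⟩)
      exact le_trans (by positivity) (hu.aux G hi hij ha)
    · exact (hu.1 j hD).trans (hu.aux2 G hi hij)
  · intro d j hd hj hdj
    have hij : i ≠ j := fun h => hj (Or.inl h.symm)
    dsimp only
    rcases hd with rfl | ⟨hd, hd2⟩
    · have : u d + 2 * b d d * u d = - u d := by rw [G.self]; ring
      rw [this, abs_neg, abs_of_nonneg hui]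
      exact hu.aux G hi hij hdj
    · rw [G.adj0 i d hd2]
      have hD : ¬ D j := by
        intro h
        rcases eq_or_ne d j with rfl | hne
        · exact hj (Or.inr ⟨hd, hd2⟩)
        · exact hdj (hcl d j hd h hne)
      have h1 := hu.2 d j hd hD hdj
      have h2 := hu.aux2 G hi hij
      simp only [mul_zero, zero_mul, add_zero]
      linarith

lemma Cone.inject {β : S → S → ℝ} {D : S → Prop} {u : S → ℝ} (hu : Cone adj M D u) {i : S}
    (hi : ¬ D i) (h0 : ∀ i j, 0 ≤ β i j) (h1 : ∀ i, β i i = 0) (h2 : ∀ i j, adj i j → β i j = 0) :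
    Cone adj M (Dn adj D i) (fun j => 2 * β i j * u i) := by
  have hui := hu.1 i hi
  have hpos : ∀ j, 0 ≤ 2 * β i j * u i := fun j =>
    mul_nonneg (mul_nonneg (by norm_num) (h0 i j)) hui
  refine ⟨fun j _ => hpos j, ?_⟩
  intro d j hd _ _
  have : β i d = 0 := by
    rcases hd with rfl | ⟨_, h⟩
    · exact h1 _
    · exact h2 _ _ h
  simpa [this] using hpos j

lemma Cone.add {D : S → Prop} (hM : 0 ≤ M) {u v : S → ℝ} (hu : Cone adj M D u) (hv : Cone adj M D v) :
    Cone adj M D (fun j => u j + v j) := by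
  refine ⟨fun j hj => add_nonneg (hu.1 j hj) (hv.1 j hj), ?_⟩
  intro d j hd hj ha
  have h1 := hu.2 d j hd hj ha
  have h2 := hv.2 d j hd hj ha
  have h3 := mul_le_mul_of_nonneg_left (abs_add_le (u d) (v d)) hM
  dsimp only
  linarith

lemma gu_cone (G : Good adj b M) {r : ℝ} (hr : 0 ≤ r) (w : List S) (hw : Red adj w) :
    Cone adj M (Dm adj w) (gu b r w) := by
  induction w with
  | nil => exact ⟨fun _ _ => hr, fun d j hd => hd.elim⟩
  | cons i w ih => exact (ih hw.1).fire G (Dm_clique G.symm w) hw.2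

lemma gu_fire_nonneg (G : Good adj b M) {r : ℝ} (hr : 0 ≤ r) {i : S} {w : List S}
    (hw : Red adj (i :: w)) : 0 ≤ gu b r w i := (gu_cone G hr w hw.1).1 i hw.2

lemma gs_nonneg (G : Good adj b M) {r : ℝ} (hr : 0 ≤ r) (w : List S) (hw : Red adj w) :
    0 ≤ gs b r w := by
  induction w with
  | nil => exact le_rfl
  | cons i w ih => exact add_nonneg (ih hw.1) (gu_fire_nonneg G hr hw)

lemma gu_growth (G : Good adj b M) {r : ℝ} (hr : 0 ≤ r) (w : List S) (hw : Red adj w) : ∀ j,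
    (¬ Dm adj w j → r * M ^ (w.count j) ≤ gu b r w j) ∧ r * M ^ (w.count j) ≤ M * |gu b r w j| := by
  have hM := G.one
  induction w with
  | nil =>
    intro j
    simp only [gu, List.count_nil, pow_zero, mul_one, abs_of_nonneg hr, le_refl, true_and,
      implies_true]
    exact le_mul_of_one_le_left hr hM
  | cons i w ih =>
    intro j
    have hc := gu_cone G hr w hw.1
    have hui := hc.1 i hw.2
    have key : ∀ x y : ℝ, x ≤ y → x ≤ M * |y| := fun x y h =>
      (h.trans (le_abs_self y)).trans (le_mul_of_one_le_left (abs_nonneg _) hM)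
    rcases eq_or_ne i j with rfl | hij
    · refine ⟨fun h => (h (Or.inl rfl)).elim, ?_⟩
      have : gu b r (i :: w) i = - gu b r w i := by rw [gu, G.self]; ring
      rw [this, abs_neg, abs_of_nonneg hui, List.count_cons_self, pow_succ]
      have := (ih hw.1 i).1 hw.2
      nlinarith
    · rw [List.count_cons_of_ne hij]
      by_cases hD : Dm adj w j
      · by_cases ha : adj i j
        · have : gu b r (i :: w) j = gu b r w j := by rw [gu, G.adj0 i j ha]; ring
          rw [this]
          exact ⟨fun h => (h (Or.inr ⟨hD, ha⟩)).elim, (ih hw.1 j).2⟩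
        · have h1 := hc.aux G hw.2 hij ha
          have h2 := hc.2 j i hD hw.2 (fun h => ha (G.symm _ _ h))
          have h3 := (ih hw.1 j).2
          have h4 : gu b r w i ≤ M * gu b r w i := le_mul_of_one_le_left hui hM
          have h5 : r * M ^ (w.count j) ≤ gu b r (i :: w) j := by rw [gu]; linarith
          exact ⟨fun _ => h5, key _ _ h5⟩
      · have h1 := hc.aux2 G hw.2 hij
        have h5 : r * M ^ (w.count j) ≤ gu b r (i :: w) j := ((ih hw.1 j).1 hD).trans h1
        exact ⟨fun _ => h5, key _ _ h5⟩

lemma gu_le_gs (G : Good adj b M) {r c : ℝ} (hr : 0 ≤ r) (hc : ∀ i j, |b i j| ≤ c)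
    (w : List S) (hw : Red adj w) (j : S) : |gu b r w j| ≤ r + 2 * c * gs b r w := by
  induction w with
  | nil => simp [gu, gs, abs_of_nonneg hr]
  | cons i w ih =>
    have h := gu_fire_nonneg G hr hw
    rw [gu, gs]
    have h1 := abs_add_le (gu b r w j) (2 * b i j * gu b r w i)
    have h2 : |2 * b i j * gu b r w i| ≤ 2 * c * gu b r w i := by
      rw [abs_mul, abs_mul, abs_of_nonneg h, abs_two]
      have := hc i j
      gcongr
    have := ih hw.1
    linarith

lemma gu_growth_prod (G : Good adj b M) {r c : ℝ} (hr : 0 ≤ r) (hc : ∀ i j, |b i j| ≤ c)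
    (w : List S) (hw : Red adj w) :
    r ^ Fintype.card S * M ^ w.length ≤ (M * (r + 2 * c * gs b r w)) ^ Fintype.card S := by
  have hM := G.one
  have h1 : ∏ j : S, (r * M ^ (w.count j)) ≤ ∏ j : S, (M * (r + 2 * c * gs b r w)) := by
    apply Finset.prod_le_prod
    · intro j _; positivity
    · intro j _
      refine ((gu_growth G hr w hw j).2).trans ?_
      exact mul_le_mul_of_nonneg_left (gu_le_gs G hr hc w hw j) (by linarith)
  rw [Finset.prod_mul_distrib, Finset.prod_const, Finset.prod_const, Finset.prod_pow_eq_pow_sum] at h1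
  have h2 : ∑ j : S, w.count j = w.length := by
    simpa using Multiset.sum_count_eq_card (s := Finset.univ) (m := (w : Multiset S)) (by simp)
  rwa [h2] at h1

lemma gu_upper {A r c : ℝ} (hr : 0 ≤ r) (hc : ∀ i j, |b i j| ≤ c) (hA : 1 + 2 * c ≤ A)
    (hA2 : 2 ≤ A) (w : List S) :
    (∀ j, |gu b r w j| ≤ r * A ^ w.length) ∧ gs b r w ≤ r * A ^ w.length := by
  induction w with
  | nil => simp [gu, gs, abs_of_nonneg hr, hr]
  | cons i w ih =>
    rw [List.length_cons, pow_succ]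
    obtain ⟨h1, h2⟩ := ih
    set q := r * A ^ w.length with hq
    have hq0 : 0 ≤ q := by positivity
    have e : r * (A ^ w.length * A) = q * A := by rw [hq]; ring
    rw [e]
    constructor
    · intro j
      rw [gu]
      have h3 := abs_add_le (gu b r w j) (2 * b i j * gu b r w i)
      have h4 : |2 * b i j * gu b r w i| ≤ 2 * c * q := by
        rw [abs_mul, abs_mul, abs_two]
        have := hc i j
        have := h1 i
        have : 0 ≤ c := (abs_nonneg _).trans (hc i j)
        gcongr
      have := h1 j
      nlinarith
    · rw [gs]
      have := (le_abs_self _).trans (h1 i)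
      nlinarith

end fire

section coeffs
variable {adj : S → S → Prop} {B β : S → S → ℝ} {r0 r1 : ℝ}

lemma gU_cone (G : Good adj B 1) (h0 : ∀ i j, 0 ≤ β i j) (h1 : ∀ i, β i i = 0)
    (h2 : ∀ i j, adj i j → β i j = 0) (hr0 : 0 ≤ r0) (hr1 : 0 ≤ r1)
    (w : List S) (hw : Red adj w) : ∀ k,
    Cone adj 1 (Dm adj w) (fun j => (gU B β r0 r1 w j).coeff k) := by
  induction w with
  | nil =>
    intro k
    refine ⟨fun _ _ => ?_, fun d j hd => hd.elim⟩
    simp only [gU, coeff_add, coeff_C_mul, coeff_C, coeff_X]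
    split_ifs <;> simp [hr0, hr1, add_nonneg]
  | cons i w ih =>
    intro k
    have hF := (ih hw.1 k).fire G (Dm_clique G.symm w) hw.2
    have e : ∀ j, gU B β r0 r1 (i :: w) j = gU B β r0 r1 w j + C (2 * B i j) * gU B β r0 r1 w i +
        C (2 * β i j) * (X * gU B β r0 r1 w i) := by
      intro j
      rw [gU]
      simp only [map_mul, map_ofNat]
      ring
    cases k with
    | zero =>
      have e2 : (fun j => (gU B β r0 r1 (i :: w) j).coeff 0) = fun j =>
          (gU B β r0 r1 w j).coeff 0 + 2 * B i j * (gU B β r0 r1 w i).coeff 0 := by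
        funext j
        simp [e]
      rw [e2]
      exact hF
    | succ k =>
      have hE := (ih hw.1 k).inject (i := i) hw.2 h0 h1 h2
      have e2 : (fun j => (gU B β r0 r1 (i :: w) j).coeff (k + 1)) = fun j =>
          ((gU B β r0 r1 w j).coeff (k + 1) + 2 * B i j * (gU B β r0 r1 w i).coeff (k + 1)) +
          2 * β i j * (gU B β r0 r1 w i).coeff k := by
        funext j
        simp only [e, coeff_add, coeff_C_mul, coeff_X_mul]
      rw [e2]
      exact hF.add zero_le_one hE

lemma gP_coeff (G : Good adj B 1) (h0 : ∀ i j, 0 ≤ β i j) (h1 : ∀ i, β i i = 0)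
    (h2 : ∀ i j, adj i j → β i j = 0) (hr0 : 0 ≤ r0) (hr1 : 0 ≤ r1)
    (w : List S) (hw : Red adj w) (k : ℕ) : 0 ≤ (gP B β r0 r1 w).coeff k := by
  induction w with
  | nil =>
    simp only [gP, coeff_one]
    split_ifs <;> simp
  | cons i w ih =>
    rw [gP, coeff_add]
    have := (gU_cone G h0 h1 h2 hr0 hr1 w hw.1 k).1 i hw.2
    have e : (2 * gU B β r0 r1 w i).coeff k = 2 * (gU B β r0 r1 w i).coeff k := by
      rw [← coeff_C_mul]; simp
    rw [e]
    have := ih hw.1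
    linarith

end coeffs

lemma poly_ineq (P : ℝ[X]) (hP : ∀ k, 0 ≤ P.coeff k) {t : ℝ} (ht : 1 ≤ t) (K : ℕ) :
    K * (P.eval t - t ^ K * P.eval 1) ≤ t * (derivative P).eval t := by
  have e1 : P.eval t = ∑ k ∈ Finset.range (P.natDegree + 1), P.coeff k * t ^ k := eval_eq_sum_range t
  have e2 : P.eval 1 = ∑ k ∈ Finset.range (P.natDegree + 1), P.coeff k := by
    rw [eval_eq_sum_range]; simp
  have e3 : t * (derivative P).eval t =
      ∑ k ∈ Finset.range (P.natDegree + 1), P.coeff k * (k * t ^ k) := by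
    rw [derivative_eval, sum_over_range, Finset.mul_sum]
    · apply Finset.sum_congr rfl
      intro k _
      cases k with
      | zero => simp
      | succ k => simp only [Nat.add_sub_cancel, pow_succ]; ring
    · simp
  rw [e1, e2, e3, Finset.mul_sum, ← Finset.sum_sub_distrib, Finset.mul_sum]
  apply Finset.sum_le_sum
  intro k _
  have : (K : ℝ) * (t ^ k - t ^ K) ≤ k * t ^ k := by
    rcases le_total K k with h | h
    · have h1 : (K : ℝ) ≤ k := by exact_mod_cast h
      have h2 : (K : ℝ) * (t ^ k - t ^ K) ≤ K * t ^ k := by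
        apply mul_le_mul_of_nonneg_left _ (Nat.cast_nonneg K)
        have : 0 ≤ t ^ K := by positivity
        linarith
      refine h2.trans (mul_le_mul_of_nonneg_right h1 (by positivity))
    · have h1 : t ^ k ≤ t ^ K := pow_le_pow_right₀ ht h
      have h2 : (K : ℝ) * (t ^ k - t ^ K) ≤ 0 :=
        mul_nonpos_of_nonneg_of_nonpos (Nat.cast_nonneg K) (by linarith)
      exact h2.trans (by positivity)
  have := mul_le_mul_of_nonneg_left this (hP k)
  linarith

lemma exists_bound (b : S → S → ℝ) : ∃ c, 0 ≤ c ∧ ∀ i j, |b i j| ≤ c := by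
  refine ⟨∑ i, ∑ j, |b i j|, by positivity, fun i j => ?_⟩
  have h1 : |b i j| ≤ ∑ j, |b i j| :=
    Finset.single_le_sum (f := fun j => |b i j|) (fun _ _ => abs_nonneg _) (Finset.mem_univ j)
  have h2 : ∑ j, |b i j| ≤ ∑ i, ∑ j, |b i j| :=
    Finset.single_le_sum (f := fun i => ∑ j, |b i j|)
      (fun _ _ => Finset.sum_nonneg fun _ _ => abs_nonneg _) (Finset.mem_univ i)
  exact h1.trans h2

/-- the standing hypotheses -/
structure GameData (adj : S → S → Prop) (B β : S → S → ℝ) (r0 r1 β0 : ℝ) : Prop where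
  good : Good adj B 1
  nonneg : ∀ i j, 0 ≤ β i j
  self : ∀ i, β i i = 0
  adj0 : ∀ i j, adj i j → β i j = 0
  big : ∀ i j, i ≠ j → ¬ adj i j → β0 ≤ β i j
  pos : 0 < β0
  r0pos : 0 < r0
  r1nonneg : 0 ≤ r1

section main
variable {adj : S → S → Prop} {B β : S → S → ℝ} {r0 r1 β0 : ℝ}

lemma GameData.goodAt (H : GameData adj B β r0 r1 β0) {τ : ℝ} (hτ : 0 ≤ τ) :
    Good adj (fun i j => B i j + τ * β i j) (1 + 2 * τ * β0) where
  symm := H.good.symm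
  irr := H.good.irr
  self i := by simp [H.good.self, H.self]
  adj0 i j h := by simp [H.good.adj0 i j h, H.adj0 i j h]
  big i j h h' := by
    have h1 := H.good.big i j h h'
    have h2 := mul_le_mul_of_nonneg_left (H.big i j h h') hτ
    linarith
  one := by
    have := mul_nonneg hτ H.pos.le
    linarith

theorem game_main (H : GameData adj B β r0 r1 β0) (T : ℝ) :
    ∃ τ : ℝ, 1 ≤ τ ∧ T ≤ τ ∧ ∀ R : ℝ, ∃ n0 : ℕ, ∀ w : List S, Red adj w →
      (derivative (gP B β r0 r1 w)).eval τ ≤ R * (gP B β r0 r1 w).eval τ → w.length ≤ n0 := by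
  set N := Fintype.card S with hN
  obtain ⟨c1, hc10, hc1⟩ := exists_bound (fun i j => B i j + 1 * β i j)
  set A := 2 + 2 * c1 with hA
  have hr1 := H.r1nonneg
  have hr0 := H.r0pos
  have hβ := H.pos
  set τ : ℝ := max (max 1 T) (A ^ N / β0) with hτ
  have hτ1 : 1 ≤ τ := (le_max_left _ _).trans (le_max_left _ _)
  have hτT : T ≤ τ := (le_max_right _ _).trans (le_max_left _ _)
  have hτA : A ^ N / β0 ≤ τ := le_max_right _ _
  have hτ0 : 0 ≤ τ := by linarith
  refine ⟨τ, hτ1, hτT, ?_⟩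
  intro R
  obtain ⟨c, hc0, hc⟩ := exists_bound (fun i j => B i j + τ * β i j)
  set M := 1 + 2 * τ * β0 with hMdef
  have G := H.goodAt hτ0
  rw [← hMdef] at G
  have hM1 := G.one
  have hMA : 2 * A ^ N ≤ M := by
    have := (div_le_iff₀ hβ).1 hτA
    rw [hMdef]; linarith
  set r := r0 + τ * r1 with hr
  have hrpos : 0 < r := by positivity
  obtain ⟨K, hK⟩ := exists_nat_gt (max (2 * τ * R) 1)
  have hK1 : 2 * τ * R < K := (le_max_left _ _).trans_lt hK
  have hK2 : (1 : ℝ) < K := (le_max_right _ _).trans_lt hK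
  set Q := 2 * τ ^ K * (1 + 2 * (r0 + 1 * r1)) with hQ
  have hQ0 : 0 ≤ Q := by positivity
  set Z := (M * ((r + c) * Q)) ^ N / r ^ N with hZ
  obtain ⟨n0, hn0⟩ := pow_unbounded_of_one_lt Z (one_lt_two)
  refine ⟨n0, fun w hw hle => ?_⟩
  by_contra hlt
  push Not at hlt
  set n := w.length with hn
  have hcoef := gP_coeff H.good H.nonneg H.self H.adj0 hr0.le hr1 w hw
  have hp := poly_ineq _ hcoef hτ1 K
  have hgs0 := gs_nonneg G hrpos.le w hw
  have hup := (gu_upper (b := fun i j => B i j + 1 * β i j) (A := A) (r := r0 + 1 * r1) (c := c1)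
    (by positivity) hc1 (by linarith) (by linarith) w).2
  have e1 := gP_eval B β r0 r1 τ w
  have e2 := gP_eval B β r0 r1 1 w
  rw [← hr] at e1
  set P := (gP B β r0 r1 w).eval τ with hP
  set P1 := (gP B β r0 r1 w).eval 1 with hP1
  set P' := (derivative (gP B β r0 r1 w)).eval τ with hP'
  have hPpos : 1 ≤ P := by rw [e1]; linarith
  have hAn : 1 ≤ A ^ n := one_le_pow₀ (by linarith)
  have hP1le : P1 ≤ (1 + 2 * (r0 + 1 * r1)) * A ^ n := by
    rw [e2]; rw [← hn] at hup; linarith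
  have hPle : P ≤ Q * A ^ n := by
    have h1 : τ * P' ≤ τ * (R * P) := mul_le_mul_of_nonneg_left hle hτ0
    have h2 : 2 * τ * R * P ≤ K * P := mul_le_mul_of_nonneg_right hK1.le (by linarith)
    have h3 : (K : ℝ) * P ≤ K * (2 * τ ^ K * P1) := by nlinarith
    have h4 : P ≤ 2 * τ ^ K * P1 := le_of_mul_le_mul_left h3 (by linarith)
    have h5 : 2 * τ ^ K * P1 ≤ 2 * τ ^ K * ((1 + 2 * (r0 + 1 * r1)) * A ^ n) :=
      mul_le_mul_of_nonneg_left hP1le (by positivity)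
    rw [hQ]; linarith
  have hg := gu_growth_prod G hrpos.le hc w hw
  rw [← hn, ← hN] at hg
  have h6 : r + 2 * c * gs (fun i j => B i j + τ * β i j) r w ≤ (r + c) * (Q * A ^ n) := by
    have h7 : (r + c) * P ≤ (r + c) * (Q * A ^ n) := mul_le_mul_of_nonneg_left hPle (by linarith)
    have h8 : 0 ≤ r * gs (fun i j => B i j + τ * β i j) r w := by positivity
    rw [e1] at h7
    linarith
  have h9 : (M * (r + 2 * c * gs (fun i j => B i j + τ * β i j) r w)) ^ N
      ≤ (M * ((r + c) * (Q * A ^ n))) ^ N := by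
    apply pow_le_pow_left₀ (by positivity)
    exact mul_le_mul_of_nonneg_left h6 (by linarith)
  have h10 : (2 * A ^ N) ^ n ≤ M ^ n := pow_le_pow_left₀ (by positivity) hMA n
  have h11 : r ^ N * (2 * A ^ N) ^ n ≤ (M * ((r + c) * Q)) ^ N * (A ^ N) ^ n := by
    have e : (M * ((r + c) * (Q * A ^ n))) ^ N = (M * ((r + c) * Q)) ^ N * (A ^ N) ^ n := by
      rw [← pow_mul, mul_comm N n, pow_mul, ← mul_pow]; ring
    rw [← e]
    exact (mul_le_mul_of_nonneg_left h10 (by positivity)).trans (hg.trans h9)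
  have h12 : r ^ N * 2 ^ n ≤ (M * ((r + c) * Q)) ^ N := by
    rw [mul_pow, ← mul_assoc] at h11
    exact le_of_mul_le_mul_right h11 (by positivity)
  have h13 : (2 : ℝ) ^ n ≤ Z := by
    rw [hZ, le_div_iff₀ (by positivity)]; linarith
  have h14 : (2 : ℝ) ^ n0 ≤ 2 ^ n := pow_le_pow_right₀ (by norm_num) hlt.le
  linarith

lemma GameData.fire_pos (H : GameData adj B β r0 r1 β0) {τ : ℝ} (hτ : 0 ≤ τ) {i : S} {w : List S}
    (hw : Red adj (i :: w)) :
    0 < gu (fun i j => B i j + τ * β i j) (r0 + τ * r1) w i := by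
  have G := H.goodAt hτ
  have hr1 := H.r1nonneg
  have hr0 := H.r0pos
  have h := (gu_growth G (r := r0 + τ * r1) (by positivity) w hw.1 i).1 hw.2
  have hM := G.one
  exact lt_of_lt_of_le (by positivity) h

end main

end Game


/-! ### Reflections and the affine representation -/

section Rep
open Matrix

abbrev M4 : Type := Matrix (Fin 4) (Fin 4) ℝ

/-- diagonal bilinear form -/
def dt (J x y : Fin 4 → ℝ) : ℝ := ∑ k, J k * x k * y k

def RR4 (J a : Fin 4 → ℝ) : M4 := Matrix.of fun k l => a k * (J l * a l)

lemma RR4_mul (J J' a b : Fin 4 → ℝ) :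
    RR4 J a * RR4 J' b = dt J a b • (Matrix.of fun k l => a k * (J' l * b l) : M4) := by
  ext k l
  simp only [RR4, Matrix.mul_apply, Matrix.of_apply, Matrix.smul_apply, dt, smul_eq_mul,
    Finset.sum_mul]
  apply Finset.sum_congr rfl
  intro m _
  ring

lemma diag_RR4 (J J' a : Fin 4 → ℝ) :
    diagonal J * RR4 J' a = (RR4 J a)ᵀ * diagonal J' := by
  ext k l
  simp only [RR4, Matrix.diagonal_mul, Matrix.mul_diagonal, Matrix.transpose_apply, Matrix.of_apply]
  ring

/-- data for the representation -/
structure Geo {S : Type*} (adj : S → S → Prop) (J J' : Fin 4 → ℝ) (al : S → Fin 4 → ℝ) : Prop where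
  ne : ∀ k, J k ≠ 0
  one : ∀ i, dt J (al i) (al i) = 1
  zero : ∀ i, dt J' (al i) (al i) = 0
  adj1 : ∀ i j, adj i j → dt J (al i) (al j) = 0
  adj2 : ∀ i j, adj i j → dt J' (al i) (al j) = 0
  symm : ∀ i j, adj i j → adj j i

/-- reflection -/
def sg (J a : Fin 4 → ℝ) : M4 := 1 - (2 : ℝ) • RR4 J a
/-- its derivative -/
def sd (J' a : Fin 4 → ℝ) : M4 := -((2 : ℝ) • RR4 J' a)

/-- affine reflection on matrices -/
def Aop (J J' a : Fin 4 → ℝ) (X : M4) : M4 := sg J a * X * sg J a + sd J' a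

/-- the invariant affine subspace -/
def InE (J J' : Fin 4 → ℝ) (X : M4) : Prop := Xᵀ * diagonal J + diagonal J * X = - diagonal J'

lemma R_R {J a : Fin 4 → ℝ} (h1 : dt J a a = 1) (J' : Fin 4 → ℝ) :
    RR4 J a * RR4 J' a = RR4 J' a := by
  rw [RR4_mul, h1, one_smul]; rfl

lemma R_zero {J a b : Fin 4 → ℝ} (h0 : dt J a b = 0) (J' : Fin 4 → ℝ) :
    RR4 J a * RR4 J' b = 0 := by
  rw [RR4_mul, h0, zero_smul]

lemma sg_sg {J a : Fin 4 → ℝ} (h1 : dt J a a = 1) : sg J a * sg J a = 1 := by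
  have := R_R h1 J
  simp only [sg, sub_mul, mul_sub, smul_mul_assoc, mul_smul_comm, one_mul, mul_one, this]
  module

lemma sd_sg {J J' a : Fin 4 → ℝ} (h0 : dt J' a a = 0) : sd J' a * sg J a = sd J' a := by
  have := R_zero h0 J
  simp only [sg, sd, mul_sub, smul_mul_assoc, mul_smul_comm, mul_one, this, neg_mul]
  simp

lemma sg_sd {J J' a : Fin 4 → ℝ} (h1 : dt J a a = 1) : sg J a * sd J' a = - sd J' a := by
  have := R_R h1 J'
  simp only [sg, sd, sub_mul, smul_mul_assoc, mul_smul_comm, one_mul, this, mul_neg]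
  module

lemma diag_sg (J a : Fin 4 → ℝ) : diagonal J * sg J a = (sg J a)ᵀ * diagonal J := by
  simp only [sg, mul_sub, mul_smul_comm, mul_one, diag_RR4, transpose_sub, transpose_smul,
    transpose_one, sub_mul, one_mul, smul_mul_assoc]

lemma diag_sd (J J' a : Fin 4 → ℝ) :
    diagonal J * sd J' a = (sg J a)ᵀ * diagonal J' - diagonal J' := by
  simp only [sg, sd, mul_neg, mul_smul_comm, mul_one, diag_RR4, transpose_sub, transpose_smul,
    transpose_one, sub_mul, one_mul, smul_mul_assoc]
  module

lemma sd_diag (J J' a : Fin 4 → ℝ) :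
    (sd J' a)ᵀ * diagonal J = diagonal J' * sg J a - diagonal J' := by
  have h := congrArg transpose (diag_sd J J' a)
  simpa [transpose_mul, transpose_sub] using h

lemma Aop_Aop {J J' a : Fin 4 → ℝ} (h1 : dt J a a = 1) (h0 : dt J' a a = 0) (X : M4) :
    Aop J J' a (Aop J J' a X) = X := by
  have e1 := sg_sg h1
  have e2 := sd_sg (J := J) h0
  have e3 := sg_sd (J' := J') h1
  unfold Aop
  have : sg J a * (sg J a * X * sg J a + sd J' a) * sg J a + sd J' a
      = (sg J a * sg J a) * X * (sg J a * sg J a) + (sg J a * sd J' a) * sg J a + sd J' a := by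
    noncomm_ring
  rw [this, e1, e3, neg_mul, e2]
  simp

lemma Aop_comm {J J' a b : Fin 4 → ℝ} (h1 : dt J a b = 0) (h2 : dt J' a b = 0)
    (h3 : dt J b a = 0) (h4 : dt J' b a = 0) (X : M4) :
    Aop J J' a (Aop J J' b X) = Aop J J' b (Aop J J' a X) := by
  have e1 : sg J a * sg J b = sg J b * sg J a := by
    have r1 := R_zero h1 J
    have r2 := R_zero h3 J
    simp only [sg, sub_mul, mul_sub, smul_mul_assoc, mul_smul_comm, one_mul, mul_one, r1, r2]
    module
  have key : ∀ {a b : Fin 4 → ℝ}, dt J a b = 0 → dt J' b a = 0 →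
      sg J a * sd J' b * sg J a = sd J' b := by
    intro a b h h'
    have r1 := R_zero h J'
    have r2 := R_zero h' J
    simp only [sg, sd, sub_mul, mul_sub, smul_mul_assoc, mul_smul_comm, one_mul, mul_one, mul_neg,
      neg_mul, r1, r2]
    simp
  unfold Aop
  rw [mul_add, add_mul, key h1 h4, mul_add, add_mul, key h3 h2]
  have e2 : sg J a * (sg J b * X * sg J b) * sg J a
      = (sg J a * sg J b) * X * (sg J b * sg J a) := by noncomm_ring
  have e3 : sg J b * (sg J a * X * sg J a) * sg J b
      = (sg J b * sg J a) * X * (sg J a * sg J b) := by noncomm_ring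
  rw [e2, e3, e1]
  abel

lemma Aop_InE {J J' a : Fin 4 → ℝ} (h0 : dt J' a a = 0) {X : M4}
    (hX : InE J J' X) : InE J J' (Aop J J' a X) := by
  have d1 := diag_sg J a
  have d2 := diag_sd J J' a
  have d3 := sd_diag J J' a
  have d4 : (sg J a)ᵀ * diagonal J' * sg J a =
      diagonal J' * sg J a + (sg J a)ᵀ * diagonal J' - diagonal J' := by
    have h := congrArg (· * sg J a) d2
    simp only [mul_assoc, sd_sg h0, sub_mul] at h
    rw [d2] at h
    rw [mul_assoc]
    rw [← sub_eq_zero] at h ⊢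
    rw [← neg_eq_zero, ← h]
    abel
  unfold InE at *
  have e : (Aop J J' a X)ᵀ * diagonal J + diagonal J * Aop J J' a X =
      (sg J a)ᵀ * (Xᵀ * diagonal J + diagonal J * X) * sg J a + (sd J' a)ᵀ * diagonal J
        + diagonal J * sd J' a := by
    unfold Aop
    have d5 : ∀ Z : M4, diagonal J * (sg J a * Z) = (sg J a)ᵀ * (diagonal J * Z) := by
      intro Z
      rw [← mul_assoc, d1, mul_assoc]
    simp only [transpose_add, transpose_mul, add_mul, mul_add, mul_assoc]
    rw [d5, ← d1]
    abel
  rw [e, hX, mul_neg, neg_mul, d4, d2, d3]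
  abel

end Rep


section Coord
open Matrix

/-- coordinates -/
def prL : M4 →ₗ[ℝ] (Fin 6 → ℝ) where
  toFun X := ![X 0 1, X 0 2, X 0 3, X 1 2, X 1 3, X 2 3]
  map_add' X Y := by ext i; fin_cases i <;> simp
  map_smul' c X := by ext i; fin_cases i <;> simp

noncomputable def eL (J : Fin 4 → ℝ) : (Fin 6 → ℝ) →ₗ[ℝ] M4 where
  toFun x := !![0, x 0, x 1, x 2;
    -(J 0 / J 1) * x 0, 0, x 3, x 4;
    -(J 0 / J 2) * x 1, -(J 1 / J 2) * x 3, 0, x 5;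
    -(J 0 / J 3) * x 2, -(J 1 / J 3) * x 4, -(J 2 / J 3) * x 5, 0]
  map_add' x y := by
    ext i j; fin_cases i <;> fin_cases j <;> simp <;> ring
  map_smul' c x := by
    ext i j; fin_cases i <;> fin_cases j <;> simp <;> ring

noncomputable def e0 (J J' : Fin 4 → ℝ) : M4 := diagonal fun k => -(J' k / (2 * J k))

noncomputable def eA (J J' : Fin 4 → ℝ) : (Fin 6 → ℝ) →ᵃ[ℝ] M4 :=
  (eL J).toAffineMap + AffineMap.const ℝ _ (e0 J J')

lemma eA_apply (J J' : Fin 4 → ℝ) (x) : eA J J' x = eL J x + e0 J J' := rfl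

noncomputable def AopA (J J' a : Fin 4 → ℝ) : M4 →ᵃ[ℝ] M4 :=
  (LinearMap.mulLeft ℝ (sg J a) ∘ₗ LinearMap.mulRight ℝ (sg J a)).toAffineMap +
    AffineMap.const ℝ _ (sd J' a)

lemma AopA_apply (J J' a : Fin 4 → ℝ) (X) : AopA J J' a X = Aop J J' a X := by
  rw [Aop, mul_assoc]; rfl

lemma pr_eA (J J' : Fin 4 → ℝ) (x) : prL (eA J J' x) = x := by
  rw [eA_apply]
  ext i
  fin_cases i <;> simp [prL, eL, e0]

lemma eA_InE {J J' : Fin 4 → ℝ} (hJ : ∀ k, J k ≠ 0) (x) : InE J J' (eA J J' x) := by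
  have := hJ 0
  have := hJ 1
  have := hJ 2
  have := hJ 3
  unfold InE
  rw [eA_apply]
  ext i j
  simp only [Matrix.add_apply, Matrix.mul_diagonal, Matrix.diagonal_mul, Matrix.transpose_apply,
    Matrix.neg_apply]
  fin_cases i <;> fin_cases j <;> simp [eL, e0] <;> field_simp <;> ring

lemma eA_pr {J J' : Fin 4 → ℝ} (hJ : ∀ k, J k ≠ 0) {X : M4} (hX : InE J J' X) :
    eA J J' (prL X) = X := by
  have h0 := hJ 0
  have h1 := hJ 1
  have h2 := hJ 2
  have h3 := hJ 3
  have hE : ∀ i j, X j i * J j + J i * X i j = - (diagonal J' : M4) i j := by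
    intro i j
    have := congrFun (congrFun hX i) j
    simpa only [Matrix.add_apply, Matrix.mul_diagonal, Matrix.diagonal_mul, Matrix.transpose_apply,
    Matrix.neg_apply] using this
  have hd : ∀ k, -(J' k / (2 * J k)) = X k k := by
    intro k
    have := hE k k
    simp only [diagonal_apply_eq] at this
    have hk := hJ k
    field_simp
    linarith
  have ho : ∀ i j, i ≠ j → -(J i / J j) * X i j = X j i := by
    intro i j hij
    have := hE i j
    rw [diagonal_apply_ne _ hij] at this
    have hk := hJ j
    field_simp
    linarith
  rw [eA_apply]
  ext i j
  fin_cases i <;> fin_cases j <;> simp [eL, e0, prL, hd] 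
  all_goals first | exact (by simpa using ho 0 1 (by decide)) | exact (by simpa using ho 0 2 (by decide)) | exact (by simpa using ho 0 3 (by decide)) | exact (by simpa using ho 1 2 (by decide)) | exact (by simpa using ho 1 3 (by decide)) | exact (by simpa using ho 2 3 (by decide))

noncomputable def TA (J J' a : Fin 4 → ℝ) : (Fin 6 → ℝ) →ᵃ[ℝ] (Fin 6 → ℝ) :=
  prL.toAffineMap.comp ((AopA J J' a).comp (eA J J'))

lemma TA_apply (J J' a : Fin 4 → ℝ) (x) : TA J J' a x = prL (Aop J J' a (eA J J' x)) := by
  rw [← AopA_apply]; rfl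

lemma eA_TA {J J' a : Fin 4 → ℝ} (hJ : ∀ k, J k ≠ 0) (h0 : dt J' a a = 0) (x) :
    eA J J' (TA J J' a x) = Aop J J' a (eA J J' x) := by
  rw [TA_apply, eA_pr hJ (Aop_InE h0 (eA_InE hJ x))]

lemma TA_TA {J J' a : Fin 4 → ℝ} (hJ : ∀ k, J k ≠ 0) (h0 : dt J' a a = 0) (h1 : dt J a a = 1) :
    TA J J' a * TA J J' a = 1 := by
  apply AffineMap.ext
  intro x
  rw [AffineMap.coe_mul, Function.comp_apply, TA_apply, eA_TA hJ h0, Aop_Aop h1 h0, pr_eA]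
  rfl

lemma AE_mul_apply (f h : (Fin 6 → ℝ) ≃ᵃ[ℝ] (Fin 6 → ℝ)) (x) : (f * h) x = f (h x) := rfl

noncomputable def TE {J J' a : Fin 4 → ℝ} (hJ : ∀ k, J k ≠ 0) (h0 : dt J' a a = 0)
    (h1 : dt J a a = 1) : (Fin 6 → ℝ) ≃ᵃ[ℝ] (Fin 6 → ℝ) :=
  AffineEquiv.equivUnitsAffineMap.symm ⟨TA J J' a, TA J J' a, TA_TA hJ h0 h1, TA_TA hJ h0 h1⟩

lemma TE_apply {J J' a : Fin 4 → ℝ} (hJ : ∀ k, J k ≠ 0) (h0 : dt J' a a = 0)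
    (h1 : dt J a a = 1) (x) : TE hJ h0 h1 x = TA J J' a x :=
  AffineEquiv.equivUnitsAffineMap_symm_apply_apply _ _

section Phi
variable {g : ℕ} {J J' : Fin 4 → ℝ} {al : Fin (2 * g + 2) → Fin 4 → ℝ}

noncomputable def Phi (H : Geo (Adj g) J J' al) : W g →* ((Fin 6 → ℝ) ≃ᵃ[ℝ] (Fin 6 → ℝ)) :=
  liftW (fun i => TE H.ne (H.zero i) (H.one i))
    (by
      intro i
      apply AffineEquiv.ext
      intro x
      rw [AE_mul_apply, TE_apply, TE_apply]
      exact DFunLike.congr_fun (TA_TA H.ne (H.zero i) (H.one i)) x)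
    (by
      intro i j hij
      apply AffineEquiv.ext
      intro x
      have hji := H.symm _ _ hij
      simp only [AE_mul_apply, TE_apply]
      rw [TA_apply, eA_TA H.ne (H.zero j), TA_apply _ _ (al j), eA_TA H.ne (H.zero i),
        Aop_comm (H.adj1 i j hij) (H.adj2 i j hij) (H.adj1 j i hji) (H.adj2 j i hji)])

/-- the action of a word on matrices -/
def Aw (J J' : Fin 4 → ℝ) (al : Fin (2 * g + 2) → Fin 4 → ℝ) : List (Fin (2 * g + 2)) → M4 → M4
  | [], X => X
  | i :: w, X => Aop J J' (al i) (Aw J J' al w X)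

lemma Phi_wprod (H : Geo (Adj g) J J' al) (w : List (Fin (2 * g + 2))) (x) :
    eA J J' (Phi H (wprod w) x) = Aw J J' al w (eA J J' x) := by
  induction w with
  | nil => simp [wprod, Aw]
  | cons i w ih =>
    rw [wprod_cons, map_mul, AE_mul_apply, Aw, ← ih]
    have : Phi H (ws i) = TE H.ne (H.zero i) (H.one i) := liftW_ws _ _ _ i
    rw [this, TE_apply, eA_TA H.ne (H.zero i)]

/-- linear part -/
def gam (J : Fin 4 → ℝ) (al : Fin (2 * g + 2) → Fin 4 → ℝ) : List (Fin (2 * g + 2)) → M4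
  | [] => 1
  | i :: w => sg J (al i) * gam J al w

/-- derivative of the linear part -/
def gamd (J J' : Fin 4 → ℝ) (al : Fin (2 * g + 2) → Fin 4 → ℝ) : List (Fin (2 * g + 2)) → M4
  | [] => 0
  | i :: w => sg J (al i) * gamd J J' al w + sd J' (al i) * gam J al w

lemma Aw_gam (H : Geo (Adj g) J J' al) (w : List (Fin (2 * g + 2))) (X : M4) :
    Aw J J' al w X * gam J al w = gam J al w * X + gamd J J' al w := by
  induction w with
  | nil => simp [Aw, gam, gamd]
  | cons i w ih =>
    rw [Aw, gam, gamd]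
    set Y := Aw J J' al w X
    have e : Aop J J' (al i) Y * sg J (al i) = sg J (al i) * Y + sd J' (al i) := by
      rw [Aop, add_mul, sd_sg (H.zero i), mul_assoc, sg_sg (H.one i), mul_one]
    rw [← mul_assoc, e, add_mul, mul_assoc, ih]
    noncomm_ring

lemma gam_append (w w' : List (Fin (2 * g + 2))) :
    gam J al (w ++ w') = gam J al w * gam J al w' := by
  induction w with
  | nil => simp [gam]
  | cons i w ih => simp [gam, ih, mul_assoc]

lemma gam_reverse (w : List (Fin (2 * g + 2))) :
    (gam J al w)ᵀ * diagonal J = diagonal J * gam J al w.reverse := by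
  induction w with
  | nil => simp [gam]
  | cons i w ih =>
    rw [gam, List.reverse_cons, gam_append, gam, gam, mul_one, transpose_mul, mul_assoc,
      ← diag_sg, ← mul_assoc, ih, mul_assoc]

lemma gam_form (H : Geo (Adj g) J J' al) (w : List (Fin (2 * g + 2))) :
    (gam J al w)ᵀ * diagonal J * gam J al w = diagonal J := by
  induction w with
  | nil => simp [gam]
  | cons i w ih =>
    rw [gam, transpose_mul]
    have e : (sg J (al i))ᵀ * diagonal J * sg J (al i) = diagonal J := by
      rw [← diag_sg, mul_assoc, sg_sg (H.one i), mul_one]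
    calc _ = (gam J al w)ᵀ * ((sg J (al i))ᵀ * diagonal J * sg J (al i)) * gam J al w := by
            simp only [mul_assoc]
      _ = _ := by rw [e, ih]

end Phi
end Coord


section Link
open Matrix Polynomial

lemma dt_symm (J x y : Fin 4 → ℝ) : dt J x y = dt J y x := by
  unfold dt
  exact Finset.sum_congr rfl fun k _ => by ring

lemma dt_add_smul (J a x y : Fin 4 → ℝ) (c : ℝ) :
    dt J a (fun k => x k + c * y k) = dt J a x + c * dt J a y := by
  unfold dt
  rw [Finset.mul_sum, ← Finset.sum_add_distrib]
  exact Finset.sum_congr rfl fun k _ => by ring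

lemma dt_form (J0 J' a x : Fin 4 → ℝ) (τ : ℝ) :
    dt (fun k => J0 k + τ * J' k) a x = dt J0 a x + τ * dt J' a x := by
  unfold dt
  rw [Finset.mul_sum, ← Finset.sum_add_distrib]
  exact Finset.sum_congr rfl fun k _ => by ring

lemma RR4_col (J a : Fin 4 → ℝ) (X : M4) (k l : Fin 4) :
    (RR4 J a * X) k l = a k * dt J a (fun m => X m l) := by
  simp only [RR4, Matrix.mul_apply, Matrix.of_apply, dt, Finset.mul_sum]
  exact Finset.sum_congr rfl fun k _ => by ring

lemma sg_col (J a : Fin 4 → ℝ) (X : M4) (k l : Fin 4) :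
    (sg J a * X) k l = X k l + 2 * (- dt J a (fun m => X m l)) * a k := by
  rw [sg, sub_mul, one_mul, smul_mul_assoc, Matrix.sub_apply, Matrix.smul_apply, RR4_col,
    smul_eq_mul]
  ring

lemma sd_col (J a : Fin 4 → ℝ) (X : M4) (k l : Fin 4) :
    (sd J a * X) k l = 2 * (- dt J a (fun m => X m l)) * a k := by
  rw [sd, neg_mul, smul_mul_assoc, Matrix.neg_apply, Matrix.smul_apply, RR4_col,
    smul_eq_mul]
  ring

variable {g : ℕ} {J0 J' : Fin 4 → ℝ} {al : Fin (2 * g + 2) → Fin 4 → ℝ}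

/-- abbreviations for the polynomials attached to the geometry -/
noncomputable def GU (J0 J' : Fin 4 → ℝ) (al : Fin (2 * g + 2) → Fin 4 → ℝ) :=
  gU (fun i j => - dt J0 (al i) (al j)) (fun i j => - dt J' (al i) (al j)) (-J0 3) (-J' 3)

noncomputable def GP (J0 J' : Fin 4 → ℝ) (al : Fin (2 * g + 2) → Fin 4 → ℝ) :=
  gP (fun i j => - dt J0 (al i) (al j)) (fun i j => - dt J' (al i) (al j)) (-J0 3) (-J' 3)

def Jt (J0 J' : Fin 4 → ℝ) (τ : ℝ) : Fin 4 → ℝ := fun k => J0 k + τ * J' k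

lemma dt_Jt (a x : Fin 4 → ℝ) (τ : ℝ) : dt (Jt J0 J' τ) a x = dt J0 a x + τ * dt J' a x :=
  dt_form J0 J' a x τ

lemma link (h3 : ∀ i, al i 3 = 1) (τ : ℝ) (w : List (Fin (2 * g + 2))) : ∀ j,
    (GU J0 J' al w j).eval τ = - dt (Jt J0 J' τ) (al j) (fun k => gam (Jt J0 J' τ) al w k 3) ∧
    (derivative (GU J0 J' al w j)).eval τ = - dt J' (al j) (fun k => gam (Jt J0 J' τ) al w k 3)
      - dt (Jt J0 J' τ) (al j) (fun k => gamd (Jt J0 J' τ) J' al w k 3) := by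
  induction w with
  | nil =>
    intro j
    simp [GU, gU, gam, gamd, dt, Fin.sum_univ_four, h3, Jt, Matrix.one_apply]
    ring
  | cons i w ih =>
    intro j
    obtain ⟨i1, i2⟩ := ih i
    obtain ⟨j1, j2⟩ := ih j
    have e : GU J0 J' al (i :: w) j = GU J0 J' al w j +
      2 * (C (- dt J0 (al i) (al j)) + C (- dt J' (al i) (al j)) * X) * GU J0 J' al w i := rfl
    constructor
    · simp only [gam, sg_col]
      rw [← i1, dt_add_smul, neg_add, ← j1, e, dt_symm _ (al j) (al i), dt_Jt]
      simp only [eval_add, eval_mul, eval_C, eval_X, eval_ofNat]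
      ring
    · simp only [gam, gamd, sg_col, sd_col, Matrix.add_apply]
      rw [← i1]
      have e2 : ∀ k, gamd (Jt J0 J' τ) J' al w k 3 +
          2 * -dt (Jt J0 J' τ) (al i) (fun m => gamd (Jt J0 J' τ) J' al w m 3) * al i k +
          2 * -dt J' (al i) (fun m => gam (Jt J0 J' τ) al w m 3) * al i k =
          gamd (Jt J0 J' τ) J' al w k 3 + 2 * (derivative (GU J0 J' al w i)).eval τ * al i k := by
        intro k
        rw [i2]; ring
      simp only [e2]
      rw [dt_add_smul, dt_add_smul, e, dt_symm (Jt J0 J' τ) (al j) (al i), dt_symm J' (al j) (al i),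
        dt_Jt (al i) (al j)]
      simp only [derivative_add, derivative_mul, derivative_C, derivative_X, derivative_ofNat,
        eval_add, eval_mul, eval_C, eval_X, eval_ofNat, eval_zero, eval_one]
      rw [j2]
      ring

lemma gam_cons (h3 : ∀ i, al i 3 = 1) (τ : ℝ) (i) (w : List (Fin (2 * g + 2))) (k : Fin 4) :
    gam (Jt J0 J' τ) al (i :: w) k 3 = gam (Jt J0 J' τ) al w k 3 +
      2 * (GU J0 J' al w i).eval τ * al i k := by
  rw [gam, sg_col, (link h3 τ w i).1]

lemma gamd_cons (h3 : ∀ i, al i 3 = 1) (τ : ℝ) (i) (w : List (Fin (2 * g + 2))) (k : Fin 4) :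
    gamd (Jt J0 J' τ) J' al (i :: w) k 3 = gamd (Jt J0 J' τ) J' al w k 3 +
      2 * (derivative (GU J0 J' al w i)).eval τ * al i k := by
  rw [gamd, Matrix.add_apply, sg_col, sd_col, (link h3 τ w i).2]
  ring

lemma gam33 (h3 : ∀ i, al i 3 = 1) (τ : ℝ) (w : List (Fin (2 * g + 2))) :
    gam (Jt J0 J' τ) al w 3 3 = (GP J0 J' al w).eval τ := by
  induction w with
  | nil => simp [gam, GP, gP]
  | cons i w ih =>
    rw [gam_cons h3, ih, h3]
    have e : GP J0 J' al (i :: w) = GP J0 J' al w + 2 * GU J0 J' al w i := rfl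
    rw [e]
    simp

lemma gamd33 (h3 : ∀ i, al i 3 = 1) (τ : ℝ) (w : List (Fin (2 * g + 2))) :
    gamd (Jt J0 J' τ) J' al w 3 3 = (derivative (GP J0 J' al w)).eval τ := by
  induction w with
  | nil => simp [gamd, GP, gP]
  | cons i w ih =>
    rw [gamd_cons h3, ih, h3]
    have e : GP J0 J' al (i :: w) = GP J0 J' al w + 2 * GU J0 J' al w i := rfl
    rw [e]
    simp

variable {β0 : ℝ}

abbrev GD (J0 J' : Fin 4 → ℝ) (al : Fin (2 * g + 2) → Fin 4 → ℝ) (β0 : ℝ) : Prop :=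
  GameData (Adj g) (fun i j => - dt J0 (al i) (al j)) (fun i j => - dt J' (al i) (al j))
    (-J0 3) (-J' 3) β0

lemma GU_pos (H : GD J0 J' al β0) {τ : ℝ} (hτ : 0 ≤ τ) {i} {w : List (Fin (2 * g + 2))}
    (hw : Red (Adj g) (i :: w)) : 0 < (GU J0 J' al w i).eval τ := by
  have := H.fire_pos hτ hw
  rw [GU, gU_eval]
  exact this

lemma gam_le (H : GD J0 J' al β0) (h3 : ∀ i, al i 3 = 1) (hle : ∀ i k, |al i k| ≤ 1) {τ : ℝ}
    (hτ : 0 ≤ τ) (w : List (Fin (2 * g + 2))) (hw : Red (Adj g) w) (k : Fin 4) :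
    |gam (Jt J0 J' τ) al w k 3| ≤ gam (Jt J0 J' τ) al w 3 3 := by
  induction w with
  | nil =>
    simp only [gam, Matrix.one_apply_eq]
    rw [Matrix.one_apply]
    split_ifs <;> simp
  | cons i w ih =>
    have hp := GU_pos H hτ hw
    rw [gam_cons h3, gam_cons h3, h3]
    refine (abs_add_le _ _).trans (add_le_add (ih hw.1) ?_)
    rw [abs_mul, abs_mul, abs_two, abs_of_pos hp]
    exact mul_le_mul_of_nonneg_left (hle i k) (by positivity)

lemma one_lt_gam33 (H : GD J0 J' al β0) (h3 : ∀ i, al i 3 = 1) {τ : ℝ}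
    (hτ : 0 ≤ τ) (w : List (Fin (2 * g + 2))) (hw : Red (Adj g) w) :
    1 ≤ gam (Jt J0 J' τ) al w 3 3 ∧ (w ≠ [] → 1 < gam (Jt J0 J' τ) al w 3 3) := by
  induction w with
  | nil => simp [gam]
  | cons i w ih =>
    have hp := GU_pos H hτ hw
    have := (ih hw.1).1
    rw [gam_cons h3, h3]
    exact ⟨by linarith, fun _ => by linarith⟩

end Link


section Final
open Matrix Polynomial
variable {g : ℕ} {J0 J' : Fin 4 → ℝ} {al : Fin (2 * g + 2) → Fin 4 → ℝ} {β0 τ : ℝ}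

lemma gam_row {J : Fin 4 → ℝ} (hJ : ∀ k, J k ≠ 0) (w : List (Fin (2 * g + 2))) (k : Fin 4) :
    gam J al w 3 k = J k / J 3 * gam J al w.reverse k 3 := by
  have h := congrFun (congrFun (gam_reverse (J := J) (al := al) w) k) 3
  rw [Matrix.mul_diagonal, Matrix.diagonal_mul, Matrix.transpose_apply] at h
  have := hJ 3
  field_simp
  linarith

theorem Phi_injective (H : GD J0 J' al β0) (h3 : ∀ i, al i 3 = 1) (hτ : 0 ≤ τ)
    (HG : Geo (Adj g) (Jt J0 J' τ) J' al) : Function.Injective (Phi HG) := by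
  rw [injective_iff_map_eq_one]
  intro x hx
  obtain ⟨w, rfl, hw⟩ := exists_mini x
  have hr := hw.red
  set J := Jt J0 J' τ with hJ
  have h1 : ∀ y, eA J J' y * gam J al w = gam J al w * eA J J' y + gamd J J' al w := by
    intro y
    rw [← Aw_gam HG, ← Phi_wprod HG, hx]
    rfl
  have h2 : ∀ y, eL J y * gam J al w = gam J al w * eL J y := by
    intro y
    have e1 := h1 y
    have e2 := h1 0
    rw [eA_apply] at e1 e2
    rw [map_zero, zero_add] at e2
    rw [add_mul, mul_add, e2] at e1
    rw [← sub_eq_zero] at e1 ⊢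
    rw [← e1]
    abel
  have c1 : ∀ k, (eL J (Pi.single 0 1) * gam J al w) k 3 = 0 := by
    intro k
    rw [h2]
    simp [Matrix.mul_apply, Fin.sum_univ_four, eL]
  have c2 : ∀ k, (eL J (Pi.single 1 1) * gam J al w) k 3 = 0 := by
    intro k
    rw [h2]
    simp [Matrix.mul_apply, Fin.sum_univ_four, eL]
  have n0 := HG.ne 0
  have n1 := HG.ne 1
  have v1 : gam J al w 1 3 = 0 := by
    have := c1 0
    simpa [Matrix.mul_apply, Fin.sum_univ_four, eL] using this
  have v0 : gam J al w 0 3 = 0 := by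
    have := c1 1
    simp [Matrix.mul_apply, Fin.sum_univ_four, eL] at this
    rcases this with (h | h) | h
    · exact (n0 h).elim
    · exact (n1 h).elim
    · exact h
  have v2 : gam J al w 2 3 = 0 := by
    have := c2 0
    simpa [Matrix.mul_apply, Fin.sum_univ_four, eL] using this
  have hf := congrFun (congrFun (gam_form HG w) 3) 3
  rw [Matrix.mul_apply] at hf
  simp only [Fin.sum_univ_four, v0, v1, v2, mul_zero, zero_add, Matrix.mul_diagonal,
    Matrix.transpose_apply, diagonal_apply_eq] at hf
  have n3 := HG.ne 3
  have hsq : gam J al w 3 3 * gam J al w 3 3 = 1 := by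
    have : J 3 * (gam J al w 3 3 * gam J al w 3 3) = J 3 * 1 := by linarith
    exact mul_left_cancel₀ n3 this
  by_contra hne
  have hwne : w ≠ [] := by
    rintro rfl
    exact hne (by simp [wprod])
  have := (one_lt_gam33 H h3 hτ w hr).2 hwne
  rw [← hJ] at this
  nlinarith

lemma eA_continuous (J J' : Fin 4 → ℝ) (i j : Fin 4) : Continuous fun x => eA J J' x i j := by
  simp only [eA_apply, Matrix.add_apply]
  refine Continuous.add ?_ continuous_const
  fin_cases i <;> fin_cases j <;> simp [eL] <;> fun_prop

theorem Phi_proper (H : GD J0 J' al β0) (h3 : ∀ i, al i 3 = 1) (hle : ∀ i k, |al i k| ≤ 1)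
    (hτ : 0 ≤ τ) (HG : Geo (Adj g) (Jt J0 J' τ) J' al)
    (hn : ∀ R : ℝ, ∃ n0 : ℕ, ∀ w : List (Fin (2 * g + 2)), Red (Adj g) w →
      (derivative (GP J0 J' al w)).eval τ ≤ R * (GP J0 J' al w).eval τ → w.length ≤ n0)
    (K : Set (Fin 6 → ℝ)) (hK : IsCompact K) :
    {x : W g | ((Phi HG x) '' K ∩ K).Nonempty}.Finite := by
  set J := Jt J0 J' τ with hJ
  obtain ⟨R1, hR1⟩ := hK.exists_bound_of_continuousOn
    (f := fun y => ∑ k, |eA J J' y 3 k|)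
    (by
      apply Continuous.continuousOn
      exact continuous_finsetSum _ fun k _ => (eA_continuous J J' 3 k).abs)
  obtain ⟨R2, hR2⟩ := hK.exists_bound_of_continuousOn
    (f := fun y => ∑ k, |J k / J 3| * |eA J J' y k 3|)
    (by
      apply Continuous.continuousOn
      exact continuous_finsetSum _ fun k _ => continuous_const.mul (eA_continuous J J' k 3).abs)
  obtain ⟨n0, hn0⟩ := hn (R1 + R2)
  refine (finite_short n0).subset ?_
  rintro x ⟨y', ⟨y, hy, rfl⟩, hy'⟩
  obtain ⟨w, rfl, hw⟩ := exists_mini x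
  refine ⟨w, rfl, hn0 w hw.red ?_⟩
  rw [← gam33 h3, ← gamd33 h3, ← hJ]
  have key := congrFun (congrFun (Aw_gam HG w (eA J J' y)) 3) 3
  rw [← Phi_wprod HG, Matrix.add_apply, Matrix.mul_apply, Matrix.mul_apply] at key
  set Y := eA J J' (Phi HG (wprod w) y) with hY
  set X := eA J J' y with hX
  have hb1 : ∑ k, |Y 3 k| ≤ R1 := (le_abs_self _).trans (hR1 _ hy')
  have hb2 : ∑ k, |J k / J 3| * |X k 3| ≤ R2 := (le_abs_self _).trans (hR2 _ hy)
  set v := gam J al w 3 3 with hv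
  have hvrev : gam J al w.reverse 3 3 = v := by
    have := gam_row (al := al) HG.ne w 3
    rw [div_self (HG.ne 3), one_mul] at this
    rw [hv, this]
  have hv0 : 0 ≤ v := (abs_nonneg _).trans (gam_le H h3 hle hτ w hw.red 0)
  have s1 : ∑ k, Y 3 k * gam J al w k 3 ≤ R1 * v := by
    refine le_trans ?_ (mul_le_mul_of_nonneg_right hb1 hv0)
    rw [Finset.sum_mul]
    apply Finset.sum_le_sum
    intro k _
    refine (le_abs_self _).trans ?_
    rw [abs_mul]
    exact mul_le_mul_of_nonneg_left (gam_le H h3 hle hτ w hw.red k) (abs_nonneg _)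
  have s2 : -(∑ k, gam J al w 3 k * X k 3) ≤ R2 * v := by
    refine le_trans ?_ (mul_le_mul_of_nonneg_right hb2 hv0)
    rw [Finset.sum_mul, ← Finset.sum_neg_distrib]
    apply Finset.sum_le_sum
    intro k _
    refine (neg_le_abs _).trans ?_
    rw [gam_row HG.ne, abs_mul, abs_mul]
    have := gam_le H h3 hle hτ w.reverse hw.reverse.red k
    rw [← hJ, hvrev] at this
    have := mul_le_mul_of_nonneg_left this (mul_nonneg (abs_nonneg (J k / J 3)) (abs_nonneg (X k 3)))
    linarith
  linarith

end Final


section Concrete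
open Real

noncomputable def th (g n : ℕ) : ℝ := 2 * π * n / (2 * g + 2)
noncomputable def kap (g : ℕ) : ℝ := cos (2 * π / (2 * g + 2))
noncomputable def kap2 (g : ℕ) : ℝ := cos (4 * π / (2 * g + 2))

noncomputable def alc (g : ℕ) (i : Fin (2 * g + 2)) : Fin 4 → ℝ :=
  ![cos (th g i), sin (th g i), (-1) ^ i.val, 1]

noncomputable def Jc (κ s : ℝ) : Fin 4 → ℝ :=
  ![s, s, (1 - s * (1 - κ)) / 2, -((s * (1 + κ) - 1) / 2)]

noncomputable def Jp (κ : ℝ) : Fin 4 → ℝ := ![1, 1, -((1 - κ) / 2), -((1 + κ) / 2)]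

lemma Jt_Jc (κ s τ : ℝ) : Jt (Jc κ s) (Jp κ) τ = Jc κ (s + τ) := by
  ext k
  fin_cases k <;> simp [Jt, Jc, Jp] <;> ring

lemma dt_Jc (g : ℕ) (κ s : ℝ) (i j : Fin (2 * g + 2)) :
    dt (Jc κ s) (alc g i) (alc g j) = s * cos (th g i - th g j) +
      (1 - s * (1 - κ)) / 2 * (-1) ^ (i.val + j.val) - (s * (1 + κ) - 1) / 2 := by
  simp [dt, Fin.sum_univ_four, Jc, alc, cos_sub, pow_add]
  ring

lemma dt_Jp (g : ℕ) (κ : ℝ) (i j : Fin (2 * g + 2)) :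
    dt (Jp κ) (alc g i) (alc g j) = cos (th g i - th g j) -
      (1 - κ) / 2 * (-1) ^ (i.val + j.val) - (1 + κ) / 2 := by
  simp [dt, Fin.sum_univ_four, Jp, alc, cos_sub, pow_add]
  ring

lemma sgn_self (n : ℕ) : (-1 : ℝ) ^ (n + n) = 1 := Even.neg_one_pow ⟨n, rfl⟩

lemma sgn_adj {g : ℕ} {i j : Fin (2 * g + 2)} (h : Adj g i j) :
    (-1 : ℝ) ^ (i.val + j.val) = -1 := by
  apply Odd.neg_one_pow
  rw [Nat.odd_iff]
  unfold Adj at h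
  omega

lemma cos_adj_aux {g : ℕ} {i j : Fin (2 * g + 2)}
    (h : j.val = i.val + 1 ∨ (j.val = 2 * g + 1 ∧ i.val = 0)) :
    cos (th g j - th g i) = kap g := by
  have hN : (2 * (g : ℝ) + 2) ≠ 0 := by positivity
  rcases h with h | ⟨h, h'⟩
  · unfold kap th
    congr 1
    rw [h]
    push_cast
    field_simp
    ring
  · unfold kap th
    have e : 2 * π * ((2 * g + 1 : ℕ) : ℝ) / (2 * g + 2) - 2 * π * ((0 : ℕ) : ℝ) / (2 * g + 2)
        = 2 * π - 2 * π / (2 * g + 2) := by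
      push_cast
      field_simp
      ring
    rw [h, h', e, cos_two_pi_sub]

lemma cos_adj {g : ℕ} {i j : Fin (2 * g + 2)} (h : Adj g i j) :
    cos (th g i - th g j) = kap g := by
  rcases h with h | h | h | h
  · rw [← cos_neg, neg_sub]; exact cos_adj_aux (Or.inl h)
  · exact cos_adj_aux (Or.inl h)
  · rw [← cos_neg, neg_sub]; exact cos_adj_aux (Or.inr ⟨h.2, h.1⟩)
  · exact cos_adj_aux (Or.inr ⟨h.2, h.1⟩)

lemma cos_le_of_mid {a x : ℝ} (h0 : 0 ≤ a) (h1 : a ≤ x) (h2 : x ≤ 2 * π - a) : cos x ≤ cos a := by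
  rcases le_total x π with h | h
  · exact cos_le_cos_of_nonneg_of_le_pi h0 h h1
  · rw [← cos_two_pi_sub x]
    exact cos_le_cos_of_nonneg_of_le_pi h0 (by linarith) (by linarith)

lemma cos_nonadj_aux {g : ℕ} {i j : Fin (2 * g + 2)} (hij : i.val < j.val) (h : ¬ Adj g i j) :
    cos (th g j - th g i) ≤ kap2 g := by
  have hN : (0 : ℝ) < 2 * (g : ℝ) + 2 := by positivity
  have hd1 : i.val + 2 ≤ j.val := by unfold Adj at h; omega
  have hd2 : j.val + 2 ≤ i.val + (2 * g + 2) := by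
    have := j.2
    unfold Adj at h; omega
  have e1 : (i.val : ℝ) + 2 ≤ j.val := by exact_mod_cast hd1
  have e2 : (j.val : ℝ) + 2 ≤ i.val + (2 * g + 2) := by exact_mod_cast hd2
  have hpi := pi_pos
  have e : th g j - th g i = 2 * π * ((j.val : ℝ) - i.val) / (2 * g + 2) := by
    unfold th; ring
  rw [e]
  apply cos_le_of_mid
  · positivity
  · apply div_le_div_of_nonneg_right _ hN.le
    nlinarith
  · rw [le_sub_iff_add_le, ← add_div, div_le_iff₀ hN]
    nlinarith

lemma cos_nonadj {g : ℕ} {i j : Fin (2 * g + 2)} (hij : i ≠ j) (h : ¬ Adj g i j) :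
    cos (th g i - th g j) ≤ kap2 g := by
  rcases lt_or_gt_of_ne (fun h' => hij (Fin.ext h') : i.val ≠ j.val) with h1 | h1
  · rw [← cos_neg, neg_sub]; exact cos_nonadj_aux h1 h
  · exact cos_nonadj_aux h1 (fun h' => h h'.symm)

lemma kap_lt_one {g : ℕ} (hg : 2 ≤ g) : kap g < 1 := by
  have hpi := pi_pos
  have hg' : (2 : ℝ) ≤ g := by exact_mod_cast hg
  rw [← cos_zero]
  apply cos_lt_cos_of_nonneg_of_le_pi le_rfl
  · rw [div_le_iff₀ (by linarith)]
    nlinarith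
  · positivity

lemma kap2_lt {g : ℕ} (hg : 2 ≤ g) : kap2 g < kap g := by
  have hpi := pi_pos
  have hg' : (2 : ℝ) ≤ g := by exact_mod_cast hg
  apply cos_lt_cos_of_nonneg_of_le_pi
  · positivity
  · rw [div_le_iff₀ (by linarith)]
    nlinarith
  · gcongr
    norm_num

lemma concrete_game {g : ℕ} (hg : 2 ≤ g) :
    GD (Jc (kap g) (2 / (kap g - kap2 g))) (Jp (kap g)) (alc g) (kap g - kap2 g) := by
  have h1 := kap_lt_one hg
  have h2 := kap2_lt hg
  have hk : -1 ≤ kap2 g := neg_one_le_cos _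
  set κ := kap g with hκ
  set s := 2 / (κ - kap2 g) with hs
  have hs0 : 0 < s := div_pos two_pos (by linarith)
  have hs2 : s * (κ - kap2 g) = 2 := div_mul_cancel₀ _ (by linarith)
  have big : ∀ i j : Fin (2 * g + 2), i ≠ j → ¬ Adj g i j →
      κ - kap2 g ≤ - dt (Jp κ) (alc g i) (alc g j) := by
    intro i j hij h
    have hc := cos_nonadj hij h
    rw [dt_Jp]
    rcases neg_one_pow_eq_or ℝ (i.val + j.val) with e | e <;> rw [e] <;> linarith
  have self : ∀ i : Fin (2 * g + 2), - dt (Jp κ) (alc g i) (alc g i) = 0 := by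
    intro i
    rw [dt_Jp, sgn_self, sub_self, cos_zero]; ring
  have adj0 : ∀ i j : Fin (2 * g + 2), Adj g i j → - dt (Jp κ) (alc g i) (alc g j) = 0 := by
    intro i j h
    rw [dt_Jp, sgn_adj h, cos_adj h]; ring
  refine ⟨⟨fun i j h => h.symm, fun i h => h.ne rfl, ?_, ?_, ?_, le_rfl⟩, ?_, self, adj0, big,
    by linarith, ?_, ?_⟩
  · intro i
    rw [dt_Jc, sgn_self, sub_self, cos_zero]; ring
  · intro i j h
    rw [dt_Jc, sgn_adj h, cos_adj h]; ring
  · intro i j hij h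
    have hc := mul_le_mul_of_nonneg_left (cos_nonadj hij h) hs0.le
    have hsk : s * κ ≤ s * 1 := mul_le_mul_of_nonneg_left h1.le hs0.le
    rw [dt_Jc]
    rcases neg_one_pow_eq_or ℝ (i.val + j.val) with e | e <;> rw [e] <;> linarith
  · intro i j
    by_cases hij : i = j
    · subst hij; rw [self]
    by_cases h : Adj g i j
    · rw [adj0 i j h]
    · have := big i j hij h
      linarith
  · have : s * (-1) ≤ s * kap2 g := mul_le_mul_of_nonneg_left hk hs0.le
    have e : Jc κ s 3 = -((s * (1 + κ) - 1) / 2) := rfl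
    rw [e]
    linarith
  · have e : Jp κ 3 = -((1 + κ) / 2) := rfl
    rw [e]
    linarith

lemma concrete_geo {g : ℕ} {s : ℝ} (hs0 : 0 < s) (h1 : 2 ≤ s * (1 - kap g))
    (h2 : 1 < s * (1 + kap g)) : Geo (Adj g) (Jc (kap g) s) (Jp (kap g)) (alc g) where
  ne k := by
    fin_cases k
    · simpa [Jc] using hs0.ne'
    · simpa [Jc] using hs0.ne'
    · have : (1 - s * (1 - kap g)) / 2 ≠ 0 := by
        apply ne_of_lt; linarith
      simpa [Jc] using this
    · have : -((s * (1 + kap g) - 1) / 2) ≠ 0 := by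
        apply ne_of_lt; linarith
      simpa [Jc] using this
  one i := by rw [dt_Jc, sgn_self, sub_self, cos_zero]; ring
  zero i := by rw [dt_Jp, sgn_self, sub_self, cos_zero]; ring
  adj1 i j h := by rw [dt_Jc, sgn_adj h, cos_adj h]; ring
  adj2 i j h := by rw [dt_Jp, sgn_adj h, cos_adj h]; ring
  symm i j h := h.symm

theorem main_aux (g : ℕ) (hg : 2 ≤ g) :
    ∃ ρ : SurfaceGroup g →* ((Fin 6 → ℝ) ≃ᵃ[ℝ] (Fin 6 → ℝ)),
      Function.Injective ρ ∧
      (∀ K : Set (Fin 6 → ℝ), IsCompact K →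
        {γ : SurfaceGroup g | ((ρ γ) '' K ∩ K).Nonempty}.Finite) := by
  have h1 := kap_lt_one hg
  have h2 := kap2_lt hg
  have hk : -1 ≤ kap2 g := neg_one_le_cos _
  have H := concrete_game hg
  obtain ⟨τ, hτ1, hτT, hτ⟩ := game_main H (2 / (1 - kap g))
  have hτ0 : 0 ≤ τ := by linarith
  have h3 : ∀ i, alc g i 3 = 1 := fun i => rfl
  have hle : ∀ i k, |alc g i k| ≤ 1 := by
    intro i k
    fin_cases k
    · exact abs_cos_le_one _
    · exact abs_sin_le_one _
    · simp [alc]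
    · simp [alc]
  set s0 := 2 / (kap g - kap2 g) with hs
  have hs0 : 0 < s0 := div_pos two_pos (by linarith)
  have hs2 : s0 * (kap g - kap2 g) = 2 := div_mul_cancel₀ _ (by linarith)
  have HG : Geo (Adj g) (Jt (Jc (kap g) s0) (Jp (kap g)) τ) (Jp (kap g)) (alc g) := by
    rw [Jt_Jc]
    apply concrete_geo (by linarith)
    · have := (div_le_iff₀ (by linarith)).1 hτT
      have : 0 ≤ s0 * (1 - kap g) := mul_nonneg hs0.le (by linarith)
      linarith
    · have e1 : 0 ≤ s0 * (1 + kap2 g) := mul_nonneg hs0.le (by linarith)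
      have e2 : 0 ≤ τ * (1 + kap g) := mul_nonneg hτ0 (by linarith)
      linarith
  refine ⟨(Phi HG).comp (phi g), ?_, ?_⟩
  · exact (Phi_injective H h3 hτ0 HG).comp phi_injective
  · intro K hK
    have hf := Phi_proper H h3 hle hτ0 HG hτ K hK
    exact Set.Finite.preimage (f := phi g) phi_injective.injOn hf

end Concrete

end SurfAff

/-- **Danciger–Guéritaud–Kassel**: for `g ≥ 2`, the fundamental group of the closed orientable
surface of genus `g` admits a faithful, properly discontinuous action on `ℝ⁶ ≅ 𝔰𝔩(2,ℂ)` by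
affine transformations. -/
theorem surface_group_proper_affine_action_on_R6 (g : ℕ) (hg : 2 ≤ g) :
    ∃ ρ : SurfaceGroup g →* ((Fin 6 → ℝ) ≃ᵃ[ℝ] (Fin 6 → ℝ)),
      Function.Injective ρ ∧
      (∀ K : Set (Fin 6 → ℝ), IsCompact K →
        {γ : SurfaceGroup g | ((ρ γ) '' K ∩ K).Nonempty}.Finite) := by
  exact SurfAff.main_aux g hg
end

section
/- For i = 1, 2, let Γ_i be a finitely generated subgroup of SL(d_i,ℝ) whose inclusion is a quasi-isometric embedding: there exist constants L ≥ 1 and C ≥ 0 such that (1/L)·|γ| − C ≤ ‖κ(γ)‖ ≤ L·|γ| + C for all γ ∈ Γ_i, where |γ| is word length with respect to a fixed finite generating set and ‖κ(γ)‖ is the Euclidean norm of the Cartan projection κ(γ) = (log σ₁(γ), …, log σ_{d_i}(γ)). Then there exist d and a homomorphism ρ from the free product Γ₁ * Γ₂ into SL(d,ℝ) which is a quasi-isometric embedding: ρ is injective and there exist L' ≥ 1 and C' ≥ 0 with (1/L')·|w| − C' ≤ ‖κ(ρ(w))‖ ≤ L'·|w| + C' for all w ∈ Γ₁ * Γ₂,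 where |w| is word length in Γ₁ * Γ₂ with respect to a finite generating set. (Tsouvalas–Weisman: a free product of quasi-isometrically embedded subgroups admits a quasi-isometric embedding into some special linear group.) -/
open Matrix

/-- The `k`-th singular value (1-indexed, in nonincreasing order) of a real `d × d` matrix:
the square roots of the eigenvalues of `Aᴴ * A = Aᵀ * A`, sorted in nonincreasing order. -/
noncomputable def sval {d : ℕ} (A : Matrix (Fin d) (Fin d) ℝ) (k : ℕ) : ℝ :=
  if h : 1 ≤ k ∧ k ≤ d then
    (fun i => Real.sqrt ((Matrix.isHermitian_conjTranspose_mul_self A).eigenvalues i))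
      ((Tuple.sort fun i => Real.sqrt ((Matrix.isHermitian_conjTranspose_mul_self A).eigenvalues i))
        (Fin.rev ⟨k - 1, by omega⟩))
  else 0

/-- The Euclidean norm of the Cartan projection `κ(A) = (log σ₁(A), …, log σ_d(A))`. -/
noncomputable def cartanNorm {d : ℕ} (A : Matrix (Fin d) (Fin d) ℝ) : ℝ :=
  Real.sqrt (∑ k ∈ Finset.Icc 1 d, (Real.log (sval A k)) ^ 2)

/-- Word length of `γ` with respect to a generating set `S`: the least `n` such that
`γ` is a product of `n` elements of `S ∪ S⁻¹`. -/
noncomputable def wordLength {G : Type*} [Group G] (S : Set G) (γ : G) : ℕ :=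
  sInf {n | ∃ w : List G, w.length = n ∧ (∀ g ∈ w, g ∈ S ∨ g⁻¹ ∈ S) ∧ w.prod = γ}


/-- Frobenius norm squared. -/
def fs {n : Type*} [Fintype n] (A : Matrix n n ℝ) : ℝ := ∑ i, ∑ j, A i j ^ 2

lemma fs_nonneg {n : Type*} [Fintype n] (A : Matrix n n ℝ) : 0 ≤ fs A :=
  Finset.sum_nonneg fun _ _ => Finset.sum_nonneg fun _ _ => sq_nonneg _

lemma sq_le_fs {n : Type*} [Fintype n] (A : Matrix n n ℝ) (i j : n) : A i j ^ 2 ≤ fs A := by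
  have h1 : A i j ^ 2 ≤ ∑ j, A i j ^ 2 :=
    Finset.single_le_sum (f := fun j => A i j ^ 2) (fun _ _ => sq_nonneg _) (Finset.mem_univ j)
  have h2 : (∑ j, A i j ^ 2) ≤ fs A :=
    Finset.single_le_sum (f := fun i => ∑ j, A i j ^ 2)
      (fun _ _ => Finset.sum_nonneg fun _ _ => sq_nonneg _) (Finset.mem_univ i)
  exact h1.trans h2

lemma fs_mul {n : Type*} [Fintype n] (A B : Matrix n n ℝ) : fs (A * B) ≤ fs A * fs B := by
  have h : fs A * fs B = ∑ i, ∑ j, (∑ k, A i k ^ 2) * (∑ k, B k j ^ 2) := by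
    unfold fs
    rw [Finset.sum_mul]
    refine Finset.sum_congr rfl fun i _ => ?_
    rw [← Finset.mul_sum]
    congr 1
    exact Finset.sum_comm
  rw [h]
  refine Finset.sum_le_sum fun i _ => Finset.sum_le_sum fun j _ => ?_
  rw [Matrix.mul_apply]
  exact Finset.sum_mul_sq_le_sq_mul_sq _ _ _

lemma fs_one {n : Type*} [Fintype n] [DecidableEq n] :
    fs (1 : Matrix n n ℝ) = Fintype.card n := by
  simp [fs, Matrix.one_apply]

lemma fs_sub {n : Type*} [Fintype n] (A B : Matrix n n ℝ) :
    fs (A - B) ≤ 2 * fs A + 2 * fs B := by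
  unfold fs
  simp only [Finset.mul_sum, ← Finset.sum_add_distrib]
  refine Finset.sum_le_sum fun i _ => Finset.sum_le_sum fun j _ => ?_
  simp only [Matrix.sub_apply]
  nlinarith [sq_nonneg (A i j + B i j)]

lemma fs_pos_of_ne {n : Type*} [Fintype n] (A : Matrix n n ℝ) (h : A ≠ 0) : 0 < fs A := by
  by_contra hc
  apply h
  ext i j
  have := sq_le_fs A i j
  have h0 : A i j ^ 2 = 0 := le_antisymm (by linarith) (sq_nonneg _)
  simpa using h0

lemma cartan_eq {d : ℕ} (A : Matrix (Fin d) (Fin d) ℝ) :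
    cartanNorm A = Real.sqrt (∑ i : Fin d,
      (Real.log (Real.sqrt ((Matrix.isHermitian_conjTranspose_mul_self A).eigenvalues i))) ^ 2) := by
  unfold cartanNorm
  congr 1
  set f := fun i => Real.sqrt ((Matrix.isHermitian_conjTranspose_mul_self A).eigenvalues i) with hf
  have h1 : ∑ k ∈ Finset.Icc 1 d, (Real.log (sval A k)) ^ 2
      = ∑ k ∈ Finset.range d, (Real.log (sval A (k + 1))) ^ 2 := by
    rw [Finset.range_eq_Ico, Finset.sum_Ico_add' (fun k => (Real.log (sval A k)) ^ 2)]
    rfl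
  rw [h1, ← Fin.sum_univ_eq_sum_range (fun k => (Real.log (sval A (k + 1))) ^ 2)]
  rw [← Equiv.sum_comp ((Fin.revPerm).trans (Tuple.sort f)) (fun i => (Real.log (Real.sqrt
    ((Matrix.isHermitian_conjTranspose_mul_self A).eigenvalues i))) ^ 2)]
  refine Finset.sum_congr rfl fun i _ => ?_
  have : sval A (i + 1) = f (Tuple.sort f (Fin.rev i)) := by
    unfold sval
    rw [dif_pos ⟨by omega, by omega⟩]
    rfl
  rw [this]
  rfl

lemma eig_sum {d : ℕ} (A : Matrix (Fin d) (Fin d) ℝ) :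
    ∑ i, (Matrix.isHermitian_conjTranspose_mul_self A).eigenvalues i = fs A := by
  have h := (Matrix.isHermitian_conjTranspose_mul_self A).trace_eq_sum_eigenvalues
  simp only [RCLike.ofReal_real_eq_id, id] at h
  rw [← h, Matrix.trace]
  simp only [Matrix.diag_apply, Matrix.mul_apply, Matrix.conjTranspose_apply, star_trivial]
  unfold fs
  rw [Finset.sum_comm]
  simp only [sq]

lemma eig_prod {d : ℕ} (A : Matrix (Fin d) (Fin d) ℝ) (hA : A.det = 1) :
    ∏ i, (Matrix.isHermitian_conjTranspose_mul_self A).eigenvalues i = 1 := by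
  have h := (Matrix.isHermitian_conjTranspose_mul_self A).det_eq_prod_eigenvalues
  simp only [RCLike.ofReal_real_eq_id, id] at h
  rw [← h]
  simp [hA]

lemma eig_pos {d : ℕ} (A : Matrix (Fin d) (Fin d) ℝ) (hA : A.det = 1) (i : Fin d) :
    0 < (Matrix.isHermitian_conjTranspose_mul_self A).eigenvalues i := by
  have h0 : 0 ≤ (Matrix.isHermitian_conjTranspose_mul_self A).eigenvalues i :=
    (Matrix.posSemidef_conjTranspose_mul_self A).eigenvalues_nonneg i
  refine lt_of_le_of_ne h0 fun h => ?_
  have := eig_prod A hA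
  rw [Finset.prod_eq_zero (Finset.mem_univ i) h.symm] at this
  exact zero_ne_one this

lemma cartan_le {d : ℕ} (A : Matrix (Fin d) (Fin d) ℝ) (hA : A.det = 1) :
    cartanNorm A ≤ (d : ℝ) ^ 2 * Real.log (1 + fs A) := by
  rw [cartan_eq]
  set μ := (Matrix.isHermitian_conjTranspose_mul_self A).eigenvalues with hμ
  have hpos := eig_pos A hA
  have hsum := eig_sum A
  have hprod := eig_prod A hA
  rw [← hμ] at hpos hsum hprod
  have hX : 0 ≤ Real.log (1 + fs A) := Real.log_nonneg (by linarith [fs_nonneg A])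
  set X := Real.log (1 + fs A)
  have hup : ∀ i, Real.log (μ i) ≤ X := fun i => by
    apply Real.log_le_log (hpos i)
    have := Finset.single_le_sum (f := μ) (fun j _ => (hpos j).le) (Finset.mem_univ i)
    linarith
  have hs0 : ∑ i, Real.log (μ i) = 0 := by
    rw [← Real.log_prod (fun i _ => (hpos i).ne'), hprod, Real.log_one]
  have habs : ∀ i, |Real.log (μ i)| ≤ d * X := fun i => by
    have hd1 : (1 : ℝ) ≤ d := by exact_mod_cast i.pos
    rw [abs_le]
    constructor
    · have h1 := Finset.add_sum_erase Finset.univ (fun i => Real.log (μ i)) (Finset.mem_univ i)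
      have h2 : ∑ j ∈ Finset.univ.erase i, Real.log (μ j) ≤ ∑ j ∈ Finset.univ.erase i, X :=
        Finset.sum_le_sum fun j _ => hup j
      have h3 : ∑ j ∈ Finset.univ.erase i, X ≤ ∑ j : Fin d, X :=
        Finset.sum_le_sum_of_subset_of_nonneg (Finset.erase_subset _ _) fun _ _ _ => hX
      simp only [Finset.sum_const, Finset.card_univ, Fintype.card_fin, nsmul_eq_mul] at h3
      simp only [Finset.sum_const, nsmul_eq_mul] at h2
      linarith
    · nlinarith [hup i]
  rw [Real.sqrt_le_left (by positivity)]
  have : ∀ i, (Real.log (Real.sqrt (μ i))) ^ 2 ≤ (d * X) ^ 2 := fun i => by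
    rw [Real.log_sqrt (hpos i).le, sq_le_sq, abs_div, abs_of_nonneg (by positivity : 0 ≤ d * X)]
    have := habs i
    rw [abs_of_pos (by norm_num : (0 : ℝ) < 2)]
    linarith [abs_nonneg (Real.log (μ i))]
  calc ∑ i, (Real.log (Real.sqrt (μ i))) ^ 2 ≤ ∑ i : Fin d, (d * X) ^ 2 :=
        Finset.sum_le_sum fun i _ => this i
    _ = d * (d * X) ^ 2 := by simp
    _ ≤ (d ^ 2 * X) ^ 2 := by
        rcases Nat.eq_zero_or_pos d with h | h
        · subst h; simp
        · have hd1 : (1 : ℝ) ≤ d := by exact_mod_cast h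
          have : (d ^ 2 * X) ^ 2 = d * (d * (d * X) ^ 2) := by ring
          rw [this]
          have : 0 ≤ (d * X) ^ 2 := by positivity
          nlinarith [mul_nonneg (sub_nonneg.2 hd1) this]

lemma fs_le_cartan {d : ℕ} (A : Matrix (Fin d) (Fin d) ℝ) (hA : A.det = 1) :
    fs A ≤ d * Real.exp (2 * cartanNorm A) := by
  rw [cartan_eq, ← eig_sum]
  set μ := (Matrix.isHermitian_conjTranspose_mul_self A).eigenvalues with hμ
  have hpos := eig_pos A hA
  rw [← hμ] at hpos
  set Y := Real.sqrt (∑ i : Fin d, (Real.log (Real.sqrt (μ i))) ^ 2) with hY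
  calc ∑ i, μ i ≤ ∑ i : Fin d, Real.exp (2 * Y) := Finset.sum_le_sum fun i _ => by
        rw [← Real.log_le_iff_le_exp (hpos i)]
        have h1 : Real.log (Real.sqrt (μ i)) ≤ Y := by
          apply Real.le_sqrt_of_sq_le
          exact Finset.single_le_sum (f := fun i => (Real.log (Real.sqrt (μ i))) ^ 2)
            (fun _ _ => sq_nonneg _) (Finset.mem_univ i)
        rw [Real.log_sqrt (hpos i).le] at h1
        linarith
    _ = _ := by simp


lemma pingpong_step {ι : Type*} [Fintype ι] [DecidableEq ι] (p q : ι)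
    (A : Matrix ι ι ℝ) (C t : ℝ) (hC : 0 ≤ C) (hA : ∀ i j, |A i j| ≤ C * |A p q|) (ht : 1 ≤ t)
    (htC : 2 * (Fintype.card ι * C) ≤ t) (w : ι → ℝ) (hwp : w p = t) (hwq : w q = t⁻¹)
    (hw : ∀ i, i ≠ p → i ≠ q → w i = 1) (x : ι → ℝ) (hx : ∀ j, |x j| ≤ |x q|) :
    let y := (Matrix.of fun i j => w i * A i j * (w j)⁻¹) *ᵥ x
    (∀ i, |y i| ≤ |y p|) ∧ t ^ 2 / 2 * |A p q| * |x q| ≤ |y p| := by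
  intro y
  have ht0 : 0 < t := by linarith
  set B := |A p q| * |x q| with hB
  have hB0 : 0 ≤ B := by positivity
  have hti : t⁻¹ ≤ 1 := inv_le_one_of_one_le₀ ht
  have hti0 : 0 < t⁻¹ := by positivity
  have hti2 : t⁻¹ * t⁻¹ ≤ 1 := by nlinarith
  -- weights
  have hwt : ∀ i j, (i ≠ p ∨ j ≠ q) → |w i * (w j)⁻¹| ≤ t := by
    intro i j hij
    by_cases hip : i = p
    · have hjq : j ≠ q := by
        rcases hij with h | h
        · exact absurd hip h
        · exact h
      by_cases hjp : j = p
      · rw [hip, hjp, hwp, mul_inv_cancel₀ ht0.ne']; simpa using ht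
      · rw [hip, hwp, hw j hjp hjq]; simp [abs_of_pos ht0]
    · by_cases hiq : i = q
      · by_cases hjp : j = p
        · rw [hiq, hjp, hwp, hwq, abs_of_nonneg (by positivity)]; linarith
        · by_cases hjq : j = q
          · rw [hiq, hjq, hwq, mul_inv_cancel₀ hti0.ne']; simpa using ht
          · rw [hiq, hwq, hw j hjp hjq]; simp [abs_of_pos ht0]; linarith
      · rw [hw i hip hiq]
        by_cases hjp : j = p
        · rw [hjp, hwp, abs_of_nonneg (by positivity)]; linarith
        · by_cases hjq : j = q
          · rw [hjq, hwq]; simp [abs_of_pos ht0]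
          · rw [hw j hjp hjq]; simpa using ht
  have hterm : ∀ i j, (i ≠ p ∨ j ≠ q) → |w i * A i j * (w j)⁻¹ * x j| ≤ t * C * B := by
    intro i j hij
    have h1 := hwt i j hij
    have h2 := hA i j
    have h3 := hx j
    calc |w i * A i j * (w j)⁻¹ * x j| = |w i * (w j)⁻¹| * |A i j| * |x j| := by
          rw [← abs_mul, ← abs_mul]; congr 1; ring
      _ ≤ t * (C * |A p q|) * |x q| := by gcongr
      _ = t * C * B := by rw [hB]; ring
  have hsumb : ∀ (s : Finset ι) i, (∀ j ∈ s, i ≠ p ∨ j ≠ q) →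
      |∑ j ∈ s, w i * A i j * (w j)⁻¹ * x j| ≤ t ^ 2 / 2 * B := by
    intro s i hs
    calc |∑ j ∈ s, w i * A i j * (w j)⁻¹ * x j|
        ≤ ∑ j ∈ s, |w i * A i j * (w j)⁻¹ * x j| := Finset.abs_sum_le_sum_abs _ _
      _ ≤ ∑ j ∈ s, t * C * B := Finset.sum_le_sum fun j hj => hterm i j (hs j hj)
      _ = s.card * (t * C * B) := by simp
      _ ≤ Fintype.card ι * (t * C * B) := by
          have : (s.card : ℝ) ≤ Fintype.card ι := by exact_mod_cast Finset.card_le_univ s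
          gcongr
      _ = (2 * (Fintype.card ι * C)) * (t / 2 * B) := by ring
      _ ≤ t * (t / 2 * B) := by gcongr
      _ = _ := by ring
  have hy : ∀ i, y i = ∑ j, w i * A i j * (w j)⁻¹ * x j := fun i => rfl
  have hyp : t ^ 2 / 2 * B ≤ |y p| := by
    have h1 := hsumb (Finset.univ.erase q) p (fun j hj => Or.inr (Finset.ne_of_mem_erase hj))
    have h2 := Finset.add_sum_erase Finset.univ (fun j => w p * A p j * (w j)⁻¹ * x j)
      (Finset.mem_univ q)
    rw [← hy] at h2
    have h3 : |w p * A p q * (w q)⁻¹ * x q| = t ^ 2 * B := by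
      rw [hwp, hwq, inv_inv, hB, abs_mul, abs_mul, abs_mul, abs_of_pos ht0]
      ring
    have h4 := abs_sub_abs_le_abs_sub (w p * A p q * (w q)⁻¹ * x q)
      (-∑ j ∈ Finset.univ.erase q, w p * A p j * (w j)⁻¹ * x j)
    rw [sub_neg_eq_add, h2, abs_neg, h3] at h4
    linarith
  refine ⟨fun i => ?_, by rw [hB] at hyp; linarith⟩
  by_cases hip : i = p
  · rw [hip]
  · rw [hy i]
    exact (hsumb Finset.univ i (fun j _ => Or.inl hip)).trans hyp

/-- The ping-pong property for a representation. -/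
def PP {G ι : Type*} [Group G] [Fintype ι] [DecidableEq ι]
    (ρ : G →* Matrix.SpecialLinearGroup ι ℝ) (ℓ : G → ℕ) (ε : ℝ) (p q : ι) : Prop :=
  ∀ g, g ≠ 1 → ∀ x : ι → ℝ, (∀ j, |x j| ≤ |x q|) →
    (∀ i, |((ρ g : Matrix ι ι ℝ) *ᵥ x) i| ≤ |((ρ g : Matrix ι ι ℝ) *ᵥ x) p|) ∧
    2 * Real.exp (ε * ℓ g) * |x q| ≤ |((ρ g : Matrix ι ι ℝ) *ᵥ x) p|

/-- Conjugation of a representation by an invertible matrix. -/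
def conjHom {ι : Type*} [Fintype ι] [DecidableEq ι] (g h : Matrix ι ι ℝ)
    (hg : h * g = 1) :
    Matrix.SpecialLinearGroup ι ℝ →* Matrix.SpecialLinearGroup ι ℝ where
  toFun A := ⟨g * A * h, by
    have h1 : h.det * g.det = 1 := by rw [← Matrix.det_mul, hg, Matrix.det_one]
    rw [Matrix.det_mul, Matrix.det_mul, A.2]; linarith⟩
  map_one' := by
    ext1; simp [mul_eq_one_comm.1 hg]
  map_mul' A B := by
    apply Subtype.ext
    change g * ((A : Matrix ι ι ℝ) * B) * h = (g * A * h) * (g * B * h)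
    calc g * ((A : Matrix ι ι ℝ) * B) * h = g * A * 1 * B * h := by simp [Matrix.mul_assoc]
      _ = (g * A * h) * (g * B * h) := by rw [← hg]; simp only [Matrix.mul_assoc]

lemma conjHom_coe {ι : Type*} [Fintype ι] [DecidableEq ι] (g h : Matrix ι ι ℝ)
    (hg : h * g = 1) (A : Matrix.SpecialLinearGroup ι ℝ) :
    (conjHom g h hg A : Matrix ι ι ℝ) = g * A * h := rfl

lemma exists_conj {ι : Type*} [Fintype ι] [DecidableEq ι] (p q : ι) (f v : ι → ℝ)
    (hp : f p = 1) (hq : f q = 0) (vp : v p = 0) (vq : v q = 1) (hfv : f ⬝ᵥ v = 0) (hpq : p ≠ q) :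
    ∃ g h : Matrix ι ι ℝ, h * g = 1 ∧ g p = f ∧ (fun i => h i q) = v := by
  set F : ι → ℝ := f - Pi.single p 1 with hF
  set W : ι → ℝ := v - Pi.single q 1 with hW
  have hFp : F p = 0 := by simp [hF, hp]
  have hFq : F q = 0 := by simp [hF, hq, hpq]
  have hWq : W q = 0 := by simp [hW, vq]
  have hWp : W p = 0 := by simp [hW, vp, hpq]
  have hFW : F ⬝ᵥ W = 0 := by
    simp [hF, hW, sub_dotProduct, dotProduct_sub, hfv, hq, vp, hpq]
  set X : Matrix ι ι ℝ := vecMulVec (Pi.single p 1) F with hX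
  set Y : Matrix ι ι ℝ := vecMulVec W (Pi.single q 1) with hY
  have hXX : X * X = 0 := by
    rw [hX, vecMulVec_mul_vecMulVec]; simp [hFp]
  have hYY : Y * Y = 0 := by
    rw [hY, vecMulVec_mul_vecMulVec]; simp [hWq]
  have hXY : X * Y = 0 := by
    rw [hX, hY, vecMulVec_mul_vecMulVec]; simp [hFW]
  have hYX : Y * X = 0 := by
    rw [hX, hY, vecMulVec_mul_vecMulVec]; simp [hpq]
  refine ⟨1 + X - Y, 1 - X + Y, ?_, ?_, ?_⟩
  · have : (1 - X + Y) * (1 + X - Y) = 1 - X * X + X * Y + Y * X - Y * Y := by noncomm_ring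
    rw [this, hXX, hYY, hXY, hYX]; simp
  · ext j
    simp [hX, hY, vecMulVec_apply, hWp, Matrix.one_apply, hF, Pi.single_apply, eq_comm]
  · ext i
    simp [hX, hY, vecMulVec_apply, hFq, Matrix.one_apply, hW, Pi.single_apply]

/-- The representation `a ↦ [[a, a - 1], [0, 1]]`. -/
def dbl {m : Type*} [Fintype m] [DecidableEq m] :
    Matrix.SpecialLinearGroup m ℝ →* Matrix.SpecialLinearGroup (m ⊕ m) ℝ where
  toFun a := ⟨fromBlocks a (a - 1) 0 1, by rw [det_fromBlocks_zero₂₁]; simp⟩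
  map_one' := by
    apply Subtype.ext; simp
  map_mul' a b := by
    apply Subtype.ext
    change fromBlocks ((a : Matrix m m ℝ) * (b : Matrix m m ℝ))
        ((a : Matrix m m ℝ) * (b : Matrix m m ℝ) - 1) 0 1
      = fromBlocks (a : Matrix m m ℝ) ((a : Matrix m m ℝ) - 1) 0 1 *
        fromBlocks (b : Matrix m m ℝ) ((b : Matrix m m ℝ) - 1) 0 1
    simp [fromBlocks_multiply, mul_sub]

/-- The tensor square representation. -/
def tsq {m : Type*} [Fintype m] [DecidableEq m] :
    Matrix.SpecialLinearGroup m ℝ →* Matrix.SpecialLinearGroup (m × m) ℝ where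
  toFun a := ⟨kroneckerMap (· * ·) (a : Matrix m m ℝ) (a : Matrix m m ℝ), by
    rw [det_kronecker]; simp⟩
  map_one' := by
    apply Subtype.ext; simp
  map_mul' a b := by
    apply Subtype.ext
    exact mul_kronecker_mul (a : Matrix m m ℝ) (b : Matrix m m ℝ)
      (a : Matrix m m ℝ) (b : Matrix m m ℝ)

/-- The padding representation `a ↦ [[a, 0], [0, 1]]`. -/
def pad {m : Type*} [Fintype m] [DecidableEq m] (k : Type*) [Fintype k] [DecidableEq k] :
    Matrix.SpecialLinearGroup m ℝ →* Matrix.SpecialLinearGroup (m ⊕ k) ℝ where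
  toFun a := ⟨fromBlocks a 0 0 1, by rw [det_fromBlocks_zero₂₁]; simp⟩
  map_one' := by
    apply Subtype.ext; simp
  map_mul' a b := by
    apply Subtype.ext
    change fromBlocks ((a : Matrix m m ℝ) * (b : Matrix m m ℝ)) 0 0 1
      = fromBlocks (a : Matrix m m ℝ) 0 0 1 * fromBlocks (b : Matrix m m ℝ) 0 0 (1 : Matrix k k ℝ)
    simp [fromBlocks_multiply]

/-- Reindexing. -/
def rei {m k : Type*} [Fintype m] [DecidableEq m] [Fintype k] [DecidableEq k] (e : k ≃ m) :
    Matrix.SpecialLinearGroup m ℝ →* Matrix.SpecialLinearGroup k ℝ where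
  toFun a := ⟨(a : Matrix m m ℝ).submatrix e e, by rw [det_submatrix_equiv_self]; exact a.2⟩
  map_one' := by
    apply Subtype.ext; simp
  map_mul' a b := by
    apply Subtype.ext
    exact (submatrix_mul_equiv (a : Matrix m m ℝ) (b : Matrix m m ℝ) e e e).symm

lemma fs_fromBlocks {m k : Type*} [Fintype m] [Fintype k] (A : Matrix m m ℝ) (B : Matrix m k ℝ)
    (D : Matrix k k ℝ) : fs (fromBlocks A B 0 D) = fs A + (∑ i, ∑ j, B i j ^ 2) + fs D := by
  simp [fs, Fintype.sum_sum_type, Finset.sum_add_distrib, add_assoc]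

lemma fs_kron {m : Type*} [Fintype m] (A : Matrix m m ℝ) :
    fs (kroneckerMap (· * ·) A A) = fs A * fs A := by
  unfold fs
  simp only [Fintype.sum_prod_type, kroneckerMap_apply, mul_pow]
  rw [Finset.sum_mul_sum]
  refine Finset.sum_congr rfl fun i _ => Finset.sum_congr rfl fun j _ => ?_
  rw [Finset.sum_mul_sum]

lemma PP_rei {G ι κ : Type*} [Group G] [Fintype ι] [DecidableEq ι] [Fintype κ] [DecidableEq κ]
    (ρ : G →* Matrix.SpecialLinearGroup ι ℝ) (ℓ : G → ℕ) (ε : ℝ) (e : κ ≃ ι) (p q : κ)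
    (h : PP ρ ℓ ε (e p) (e q)) : PP ((rei e).comp ρ) ℓ ε p q := by
  intro g hg x hx
  have h1 := h g hg (x ∘ e.symm) (fun j => by simpa using hx (e.symm j))
  have h2 : (((rei e).comp ρ g : Matrix.SpecialLinearGroup κ ℝ) : Matrix κ κ ℝ) *ᵥ x
      = ((ρ g : Matrix ι ι ℝ) *ᵥ (x ∘ e.symm)) ∘ e := by
    have : (((rei e).comp ρ g : Matrix.SpecialLinearGroup κ ℝ) : Matrix κ κ ℝ)
      = (ρ g : Matrix ι ι ℝ).submatrix e e := rfl
    rw [this, submatrix_mulVec_equiv]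
  rw [h2]
  refine ⟨fun i => h1.1 (e i), ?_⟩
  simpa using h1.2


lemma disp_lower {G m : Type*} [Group G] [Fintype m] [DecidableEq m]
    (σ : G →* Matrix.SpecialLinearGroup m ℝ) (hinj : Function.Injective σ)
    (hfin : ∀ R : ℝ, {g | fs (σ g : Matrix m m ℝ) ≤ R}.Finite) :
    ∃ c : ℝ, 0 < c ∧ ∀ g, g ≠ 1 →
      c * (1 + fs (σ g : Matrix m m ℝ)) ≤ fs ((σ g : Matrix m m ℝ) - 1) := by
  set N : ℝ := ((Fintype.card m : ℕ) : ℝ) with hN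
  have hN0 : 0 ≤ N := by positivity
  set R : ℝ := 4 * N + 1 with hR
  have hpos : ∀ g, g ≠ 1 → 0 < fs ((σ g : Matrix m m ℝ) - 1) := by
    intro g hg
    apply fs_pos_of_ne
    rw [sub_ne_zero]
    intro h
    apply hg
    apply hinj
    rw [map_one]
    exact Subtype.ext h
  obtain ⟨c₀, hc₀, hc⟩ : ∃ c₀ : ℝ, 0 < c₀ ∧ ∀ g, fs (σ g : Matrix m m ℝ) ≤ R → g ≠ 1 →
      c₀ ≤ fs ((σ g : Matrix m m ℝ) - 1) := by
    have hf : {g | fs (σ g : Matrix m m ℝ) ≤ R ∧ g ≠ 1}.Finite :=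
      (hfin R).subset fun g hg => hg.1
    rcases Set.eq_empty_or_nonempty {g | fs (σ g : Matrix m m ℝ) ≤ R ∧ g ≠ 1} with h | h
    · refine ⟨1, one_pos, fun g h1 h2 => ?_⟩
      have : g ∈ {g | fs (σ g : Matrix m m ℝ) ≤ R ∧ g ≠ 1} := ⟨h1, h2⟩
      rw [h] at this
      exact this.elim
    · obtain ⟨a, ha, hmin⟩ := Set.exists_min_image _
        (fun g => fs ((σ g : Matrix m m ℝ) - 1)) hf h
      exact ⟨_, hpos a ha.2, fun g h1 h2 => hmin g ⟨h1, h2⟩⟩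
  refine ⟨min (1 / 8) (c₀ / (1 + R)), by positivity, fun g hg => ?_⟩
  have h0 := fs_nonneg (σ g : Matrix m m ℝ)
  by_cases h : fs (σ g : Matrix m m ℝ) ≤ R
  · calc min (1 / 8) (c₀ / (1 + R)) * (1 + fs (σ g : Matrix m m ℝ))
        ≤ (c₀ / (1 + R)) * (1 + R) := by
          apply mul_le_mul (min_le_right _ _) (by linarith) (by linarith) (by positivity)
      _ = c₀ := div_mul_cancel₀ _ (by positivity)
      _ ≤ _ := hc g h hg
  · push Not at h
    have h1 := fs_sub ((σ g : Matrix m m ℝ) - 1) (-1)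
    have h2 : fs (-1 : Matrix m m ℝ) = N := by
      rw [hN, ← fs_one]; simp [fs]
    rw [sub_neg_eq_add, sub_add_cancel, h2] at h1
    have h3 : min (1 / 8) (c₀ / (1 + R)) * (1 + fs (σ g : Matrix m m ℝ))
        ≤ 1 / 8 * (1 + fs (σ g : Matrix m m ℝ)) := by
      apply mul_le_mul_of_nonneg_right (min_le_left _ _) (by linarith)
    linarith

lemma exists_PP0 {G m : Type*} [Group G] [Fintype m] [DecidableEq m] (i₀ : m)
    (σ : G →* Matrix.SpecialLinearGroup m ℝ) (hinj : Function.Injective σ)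
    (ℓ : G → ℕ) (K K' : ℝ) (hK : 1 ≤ K) (hK' : 0 ≤ K')
    (hℓ : ∀ g, (ℓ g : ℝ) ≤ K * Real.log (1 + fs (σ g : Matrix m m ℝ)) + K')
    (hfin : ∀ n : ℕ, {g | ℓ g ≤ n}.Finite) :
    ∃ ρ : G →* Matrix.SpecialLinearGroup ((m ⊕ m) × (m ⊕ m)) ℝ,
      PP ρ ℓ (1 / K) (Sum.inl i₀, Sum.inl i₀) (Sum.inr i₀, Sum.inr i₀) := by
  have hfin' : ∀ R : ℝ, {g | fs (σ g : Matrix m m ℝ) ≤ R}.Finite := by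
    intro R
    refine (hfin ⌈K * Real.log (1 + R) + K'⌉₊).subset fun g hg => ?_
    have hg' : fs (σ g : Matrix m m ℝ) ≤ R := hg
    have h0 := fs_nonneg (σ g : Matrix m m ℝ)
    have h1 : Real.log (1 + fs (σ g : Matrix m m ℝ)) ≤ Real.log (1 + R) :=
      Real.log_le_log (by linarith) (by linarith)
    have h2 : (ℓ g : ℝ) ≤ K * Real.log (1 + R) + K' := by
      have := hℓ g
      nlinarith
    have h3 := h2.trans (Nat.le_ceil _)
    exact_mod_cast h3
  obtain ⟨c, hc, hdisp⟩ := disp_lower σ hinj hfin'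
  set p : (m ⊕ m) × (m ⊕ m) := (Sum.inl i₀, Sum.inl i₀) with hp
  set q : (m ⊕ m) × (m ⊕ m) := (Sum.inr i₀, Sum.inr i₀) with hq
  have hpq : p ≠ q := by simp [hp, hq]
  set N : ℝ := ((Fintype.card m : ℕ) : ℝ) with hN
  have hN0 : 0 ≤ N := by positivity
  set f : (m ⊕ m) × (m ⊕ m) → ℝ := fun x => ∑ i : m, if x = (Sum.inl i, Sum.inl i) then 1 else 0
    with hf
  set v : (m ⊕ m) × (m ⊕ m) → ℝ := fun x => ∑ i : m, if x = (Sum.inr i, Sum.inr i) then 1 else 0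
    with hv
  have hfB : ∀ (z : (m ⊕ m) × (m ⊕ m) → ℝ), ∑ x, f x * z x = ∑ i, z (Sum.inl i, Sum.inl i) := by
    intro z
    simp only [hf, Finset.sum_mul, ite_mul, one_mul, zero_mul]
    rw [Finset.sum_comm]
    simp
  have hvB : ∀ (z : (m ⊕ m) × (m ⊕ m) → ℝ), ∑ x, z x * v x = ∑ i, z (Sum.inr i, Sum.inr i) := by
    intro z
    simp only [hv, Finset.mul_sum, mul_ite, mul_one, mul_zero]
    rw [Finset.sum_comm]
    simp
  obtain ⟨g, h, hhg, hgp, hhq⟩ := exists_conj p q f v (by simp [hf, hp, Finset.filter_eq])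
    (by simp [hf, hq])
    (by simp [hv, hp]) (by simp [hv, hq, Finset.filter_eq])
    (by
      have := hfB v
      rw [dotProduct, this]
      simp [hv]) hpq
  -- the representation before the diagonal conjugation
  set τ : G →* Matrix.SpecialLinearGroup ((m ⊕ m) × (m ⊕ m)) ℝ :=
    (conjHom g h hhg).comp (tsq.comp (dbl.comp σ)) with hτ
  have hτc : ∀ a, (τ a : Matrix ((m ⊕ m) × (m ⊕ m)) ((m ⊕ m) × (m ⊕ m)) ℝ) = g * (kroneckerMap (· * ·)
      (fromBlocks (σ a : Matrix m m ℝ) ((σ a : Matrix m m ℝ) - 1) 0 1)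
      (fromBlocks (σ a : Matrix m m ℝ) ((σ a : Matrix m m ℝ) - 1) 0 1)) * h := fun a => rfl
  have hτpq : ∀ a, (τ a : Matrix ((m ⊕ m) × (m ⊕ m)) ((m ⊕ m) × (m ⊕ m)) ℝ) p q = fs ((σ a : Matrix m m ℝ) - 1) := by
    intro a
    rw [hτc, Matrix.mul_apply]
    have h1 : ∀ y, h y q = v y := fun y => congrFun hhq y
    simp only [h1, hvB, Matrix.mul_apply, hgp, hfB]
    unfold fs
    rw [Finset.sum_comm]
    simp [sq]
  set M : ℝ := Real.sqrt (fs g * fs h) * (3 * N + 3) with hM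
  have hM0 : 0 ≤ M := by positivity
  have hbound : ∀ a i j, |(τ a : Matrix ((m ⊕ m) × (m ⊕ m)) ((m ⊕ m) × (m ⊕ m)) ℝ) i j| ≤ M * (1 + fs (σ a : Matrix m m ℝ)) := by
    intro a i j
    have h0 := fs_nonneg (σ a : Matrix m m ℝ)
    set E : Matrix (m ⊕ m) (m ⊕ m) ℝ :=
      fromBlocks (σ a : Matrix m m ℝ) ((σ a : Matrix m m ℝ) - 1) 0 1 with hE
    have hfsE : fs E ≤ (3 * N + 3) * (1 + fs (σ a : Matrix m m ℝ)) := by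
      rw [hE, fs_fromBlocks, fs_one]
      have h1 := fs_sub (σ a : Matrix m m ℝ) 1
      rw [fs_one] at h1
      have h2 : (∑ i, ∑ j, ((σ a : Matrix m m ℝ) - 1) i j ^ 2) = fs ((σ a : Matrix m m ℝ) - 1) :=
        rfl
      rw [h2]
      rw [← hN] at h1 ⊢
      nlinarith
    have h1 : (τ a : Matrix ((m ⊕ m) × (m ⊕ m)) ((m ⊕ m) × (m ⊕ m)) ℝ) i j ^ 2 ≤ (fs g * fs h) * (fs E) ^ 2 := by
      calc (τ a : Matrix ((m ⊕ m) × (m ⊕ m)) ((m ⊕ m) × (m ⊕ m)) ℝ) i j ^ 2 ≤ fs (τ a : Matrix ((m ⊕ m) × (m ⊕ m)) ((m ⊕ m) × (m ⊕ m)) ℝ) := sq_le_fs _ i j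
        _ ≤ fs g * fs (kroneckerMap (· * ·) E E) * fs h := by
            rw [hτc]
            exact (fs_mul _ _).trans (mul_le_mul_of_nonneg_right (fs_mul _ _) (fs_nonneg _))
        _ = _ := by rw [fs_kron]; ring
    have h2 := Real.abs_le_sqrt h1
    rw [Real.sqrt_mul (mul_nonneg (fs_nonneg _) (fs_nonneg _)), Real.sqrt_sq (fs_nonneg _)] at h2
    refine h2.trans ?_
    rw [hM, mul_assoc]
    gcongr
  set Cc : ℝ := M / c with hCc
  have hCc0 : 0 ≤ Cc := by positivity
  have hCA : ∀ a, a ≠ 1 → ∀ i j, |(τ a : Matrix ((m ⊕ m) × (m ⊕ m)) ((m ⊕ m) × (m ⊕ m)) ℝ) i j| ≤ Cc * |(τ a : Matrix ((m ⊕ m) × (m ⊕ m)) ((m ⊕ m) × (m ⊕ m)) ℝ) p q| := by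
    intro a ha i j
    refine (hbound a i j).trans ?_
    rw [hτpq, abs_of_nonneg (fs_nonneg _), hCc]
    have := hdisp a ha
    calc M * (1 + fs (σ a : Matrix m m ℝ)) = M / c * (c * (1 + fs (σ a : Matrix m m ℝ))) := by
          field_simp
      _ ≤ _ := by gcongr
  set D : ℝ := ((Fintype.card ((m ⊕ m) × (m ⊕ m)) : ℕ) : ℝ) with hD
  have hD0 : 0 ≤ D := by positivity
  set t : ℝ := 1 + 2 * (D * Cc) + 4 * Real.exp K' / c with ht
  have hex : 0 < 4 * Real.exp K' / c := by positivity
  have hDC : 0 ≤ D * Cc := by positivity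
  have ht1 : 1 ≤ t := by linarith
  have ht0 : 0 < t := by linarith
  set w : (m ⊕ m) × (m ⊕ m) → ℝ := fun x => if x = p then t else if x = q then t⁻¹ else 1 with hw
  have hwne : ∀ x, w x ≠ 0 := by
    intro x
    simp only [hw]
    split_ifs
    · exact ht0.ne'
    · exact (inv_pos.2 ht0).ne'
    · exact one_ne_zero
  have hdd : diagonal (fun x => (w x)⁻¹) * diagonal w = 1 := by
    rw [diagonal_mul_diagonal, ← diagonal_one]
    congr 1
    ext x
    exact inv_mul_cancel₀ (hwne x)
  refine ⟨(conjHom (diagonal w) (diagonal fun x => (w x)⁻¹) hdd).comp τ, ?_⟩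
  intro a ha x hx
  have hmat : ((((conjHom (diagonal w) (diagonal fun x => (w x)⁻¹) hdd).comp τ) a :
      Matrix.SpecialLinearGroup _ ℝ) : Matrix _ _ ℝ)
      = Matrix.of fun i j => w i * (τ a : Matrix ((m ⊕ m) × (m ⊕ m)) ((m ⊕ m) × (m ⊕ m)) ℝ) i j * (w j)⁻¹ := by
    rw [MonoidHom.comp_apply, conjHom_coe]
    ext i j
    simp [Matrix.mul_diagonal, Matrix.diagonal_mul]
  rw [hmat]
  have hstep := pingpong_step p q (τ a : Matrix ((m ⊕ m) × (m ⊕ m)) ((m ⊕ m) × (m ⊕ m)) ℝ) Cc t hCc0 (hCA a ha) ht1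
    (by rw [← hD]; linarith) w (by simp [hw]) (by simp [hw, hpq.symm])
    (fun i h1 h2 => by simp [hw, h1, h2]) x hx
  refine ⟨hstep.1, le_trans ?_ hstep.2⟩
  apply mul_le_mul_of_nonneg_right _ (abs_nonneg _)
  rw [hτpq, abs_of_nonneg (fs_nonneg _)]
  have h0 := fs_nonneg (σ a : Matrix m m ℝ)
  have h1 : Real.exp (1 / K * ℓ a) ≤ (1 + fs (σ a : Matrix m m ℝ)) * Real.exp K' := by
    have hlog : Real.exp (Real.log (1 + fs (σ a : Matrix m m ℝ)) + K')
        = (1 + fs (σ a : Matrix m m ℝ)) * Real.exp K' := by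
      rw [Real.exp_add, Real.exp_log (by linarith)]
    rw [← hlog, Real.exp_le_exp]
    have h2 := hℓ a
    have hK0 : 0 < K := by linarith
    rw [div_mul_eq_mul_div, one_mul, div_le_iff₀ hK0]
    nlinarith
  have h3 : t ≤ t ^ 2 := by nlinarith
  have h4 := hdisp a ha
  calc 2 * Real.exp (1 / K * ℓ a) ≤ 2 * ((1 + fs (σ a : Matrix m m ℝ)) * Real.exp K') := by
        gcongr
    _ = (4 * Real.exp K' / c) / 2 * (c * (1 + fs (σ a : Matrix m m ℝ))) := by
        field_simp
        ring
    _ ≤ t ^ 2 / 2 * fs ((σ a : Matrix m m ℝ) - 1) := by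
        apply mul_le_mul _ h4 (by positivity) (by positivity)
        linarith

lemma exists_PP {G m : Type*} [Group G] [Fintype m] [DecidableEq m] (i₀ : m)
    (σ : G →* Matrix.SpecialLinearGroup m ℝ) (hinj : Function.Injective σ)
    (ℓ : G → ℕ) (K K' : ℝ) (hK : 1 ≤ K) (hK' : 0 ≤ K')
    (hℓ : ∀ g, (ℓ g : ℝ) ≤ K * Real.log (1 + fs (σ g : Matrix m m ℝ)) + K')
    (hfin : ∀ n : ℕ, {g | ℓ g ≤ n}.Finite) (D : ℕ)
    (hD : Fintype.card ((m ⊕ m) × (m ⊕ m)) = D) (p q : Fin D) (hpq : p ≠ q) :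
    ∃ ρ : G →* Matrix.SpecialLinearGroup (Fin D) ℝ, PP ρ ℓ (1 / K) p q := by
  obtain ⟨ρ, hρ⟩ := exists_PP0 i₀ σ hinj ℓ K K' hK hK' hℓ hfin
  set p₀ : (m ⊕ m) × (m ⊕ m) := (Sum.inl i₀, Sum.inl i₀) with hp
  set q₀ : (m ⊕ m) × (m ⊕ m) := (Sum.inr i₀, Sum.inr i₀) with hq
  have hpq₀ : p₀ ≠ q₀ := by simp [hp, hq]
  let e₁ : Fin D ≃ (m ⊕ m) × (m ⊕ m) := (Fintype.equivFinOfCardEq hD).symm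
  let e₂ := e₁.trans (Equiv.swap (e₁ p) p₀)
  have h2p : e₂ p = p₀ := by simp [e₂]
  let e₃ := e₂.trans (Equiv.swap (e₂ q) q₀)
  have h3q : e₃ q = q₀ := by simp [e₃]
  have h3p : e₃ p = p₀ := by
    simp only [e₃, Equiv.trans_apply, h2p]
    apply Equiv.swap_apply_of_ne_of_ne _ hpq₀
    rw [← h2p]
    exact fun h => hpq (e₂.injective h)
  refine ⟨(rei e₃).comp ρ, PP_rei ρ ℓ _ e₃ p q ?_⟩
  rw [h3p, h3q]
  exact hρ


lemma wl_le {G : Type*} [Group G] (S : Set G) (l : List G) (h : ∀ g ∈ l, g ∈ S ∨ g⁻¹ ∈ S) :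
    wordLength S l.prod ≤ l.length :=
  Nat.sInf_le ⟨l, rfl, h, rfl⟩

lemma wl_exists {G : Type*} [Group G] (S : Set G) (γ : G) (hγ : γ ∈ Subgroup.closure S) :
    ∃ l : List G, l.length = wordLength S γ ∧ (∀ g ∈ l, g ∈ S ∨ g⁻¹ ∈ S) ∧ l.prod = γ := by
  rw [← Subgroup.mem_toSubmonoid, Subgroup.closure_toSubmonoid] at hγ
  obtain ⟨l, h1, h2⟩ := Submonoid.exists_list_of_mem_closure hγ
  replace h1 : ∀ g ∈ l, g ∈ S ∨ g⁻¹ ∈ S := fun g hg => h1 g hg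
  exact Nat.sInf_mem (s := {n | ∃ w : List G, w.length = n ∧ (∀ g ∈ w, g ∈ S ∨ g⁻¹ ∈ S)
    ∧ w.prod = γ}) ⟨l.length, l, rfl, h1, h2⟩

lemma wl_mul {G : Type*} [Group G] (S : Set G) (hS : Subgroup.closure S = ⊤) (a b : G) :
    wordLength S (a * b) ≤ wordLength S a + wordLength S b := by
  obtain ⟨l, h1, h2, h3⟩ := wl_exists S a (by rw [hS]; trivial)
  obtain ⟨l', h1', h2', h3'⟩ := wl_exists S b (by rw [hS]; trivial)
  rw [← h1, ← h1', ← List.length_append, ← h3, ← h3', ← List.prod_append]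
  apply wl_le
  intro g hg
  rcases List.mem_append.1 hg with h | h
  · exact h2 g h
  · exact h2' g h

lemma wl_one {G : Type*} [Group G] (S : Set G) : wordLength S (1 : G) = 0 := by
  have := wl_le S [] (by simp)
  simpa using this

lemma lists_finite {G : Type*} [Group G] (S : Set G) (hS : S.Finite) (n : ℕ) :
    {g : G | ∃ l : List G, l.length ≤ n ∧ (∀ g ∈ l, g ∈ S ∨ g⁻¹ ∈ S) ∧ l.prod = g}.Finite := by
  induction n with
  | zero =>
    refine (Set.finite_singleton (1 : G)).subset ?_
    rintro g ⟨l, h1, _, h3⟩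
    have : l = [] := List.length_eq_zero_iff.1 (Nat.le_zero.1 h1)
    subst this
    simpa using h3.symm
  | succ n ih =>
    have hf : (S ∪ (fun g => g⁻¹) '' S).Finite := hS.union (hS.image _)
    refine ((Set.finite_singleton (1 : G)).union (Set.Finite.image2 (fun a b => a * b) hf ih)).subset ?_
    rintro g ⟨l, h1, h2, h3⟩
    cases l with
    | nil => left; simpa using h3.symm
    | cons a l =>
      right
      refine ⟨a, ?_, l.prod, ⟨l, by simpa using h1, fun g hg => h2 g (List.mem_cons_of_mem _ hg),
        rfl⟩, by simpa using h3⟩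
      rcases h2 a (List.mem_cons_self) with h | h
      · exact Or.inl h
      · exact Or.inr ⟨_, h, inv_inv a⟩

lemma ball_finite {G : Type*} [Group G] (S : Set G) (hS : S.Finite) (Γ : Subgroup G)
    (hΓ : Subgroup.closure S = Γ) (n : ℕ) : {g : Γ | wordLength S (g : G) ≤ n}.Finite := by
  refine Set.Finite.of_finite_image ((lists_finite S hS n).subset ?_)
    (f := fun g : Γ => (g : G)) Subtype.val_injective.injOn
  rintro _ ⟨g, hg, rfl⟩
  obtain ⟨l, h1, h2, h3⟩ := wl_exists S (g : G) (by rw [hΓ]; exact g.2)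
  exact ⟨l, h1 ▸ hg, h2, h3⟩

/-- Word length is not increased by a hom which maps generators to generators. -/
lemma wl_map {G H : Type*} [Group G] [Group H] (S : Set G) (Γ : Subgroup G)
    (hΓ : Subgroup.closure S = Γ) (φ : Γ →* H) (T : Set H)
    (hT : ∀ g : Γ, (g : G) ∈ S → φ g ∈ T) (g : Γ) :
    wordLength T (φ g) ≤ wordLength S (g : G) := by
  obtain ⟨l, h1, h2, h3⟩ := wl_exists S (g : G) (by rw [hΓ]; exact g.2)
  have hmem : ∀ x ∈ l, x ∈ Γ := by
    intro x hx
    rw [← hΓ]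
    rcases h2 x hx with h | h
    · exact Subgroup.subset_closure h
    · simpa using Subgroup.inv_mem _ (Subgroup.subset_closure h)
  have hg : g = (l.attach.map fun x => (⟨x.1, hmem x.1 x.2⟩ : Γ)).prod := by
    apply Subtype.ext
    rw [← h3, Subgroup.val_list_prod, List.map_map]
    congr 1
    exact (List.attach_map_subtype_val l).symm
  rw [hg, map_list_prod, ← hg, ← h1]
  refine (wl_le T _ ?_).trans (by simp)
  intro y hy
  simp only [List.map_map, List.mem_map, List.mem_attach, true_and, Function.comp] at hy
  obtain ⟨x, rfl⟩ := hy
  rcases h2 x.1 x.2 with h | h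
  · exact Or.inl (hT _ h)
  · right
    rw [← map_inv]
    exact hT _ h

/-- Reduced words. The boolean is `true` when the first letter comes from the left factor. -/
inductive RW {G H : Type*} [Group G] [Group H] : Bool → Monoid.Coprod G H → Prop
  | sl (a : G) (ha : a ≠ 1) : RW true (Monoid.Coprod.inl a)
  | sr (b : H) (hb : b ≠ 1) : RW false (Monoid.Coprod.inr b)
  | cl (a : G) (ha : a ≠ 1) (w : Monoid.Coprod G H) (hw : RW false w) :
      RW true (Monoid.Coprod.inl a * w)
  | cr (b : H) (hb : b ≠ 1) (w : Monoid.Coprod G H) (hw : RW true w) :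
      RW false (Monoid.Coprod.inr b * w)

lemma RW_true_cases {G H : Type*} [Group G] [Group H] (w : Monoid.Coprod G H) (h : RW true w) :
    ∃ (a : G) (w' : Monoid.Coprod G H), w = Monoid.Coprod.inl a * w' ∧ (w' = 1 ∨ RW false w') := by
  cases h with
  | sl a ha => exact ⟨a, 1, by simp, Or.inl rfl⟩
  | cl a ha w hw => exact ⟨a, w, rfl, Or.inr hw⟩

lemma RW_false_cases {G H : Type*} [Group G] [Group H] (w : Monoid.Coprod G H) (h : RW false w) :
    ∃ (b : H) (w' : Monoid.Coprod G H), w = Monoid.Coprod.inr b * w' ∧ (w' = 1 ∨ RW true w') := by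
  cases h with
  | sr a ha => exact ⟨a, 1, by simp, Or.inl rfl⟩
  | cr a ha w hw => exact ⟨a, w, rfl, Or.inr hw⟩

lemma RW_exists {G H : Type*} [Group G] [Group H] (w : Monoid.Coprod G H) :
    w = 1 ∨ RW true w ∨ RW false w := by
  have consl : ∀ (a : G) (w' : Monoid.Coprod G H), (w' = 1 ∨ RW false w') →
      (Monoid.Coprod.inl a * w' = 1 ∨ RW true (Monoid.Coprod.inl a * w') ∨
        RW false (Monoid.Coprod.inl a * w')) := by
    intro a w' h
    by_cases ha : a = 1
    · subst ha
      rw [map_one, one_mul]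
      rcases h with h | h
      · exact Or.inl h
      · exact Or.inr (Or.inr h)
    · rcases h with h | h
      · subst h; rw [mul_one]; exact Or.inr (Or.inl (RW.sl a ha))
      · exact Or.inr (Or.inl (RW.cl a ha w' h))
  have consr : ∀ (a : H) (w' : Monoid.Coprod G H), (w' = 1 ∨ RW true w') →
      (Monoid.Coprod.inr a * w' = 1 ∨ RW true (Monoid.Coprod.inr a * w') ∨
        RW false (Monoid.Coprod.inr a * w')) := by
    intro a w' h
    by_cases ha : a = 1
    · subst ha
      rw [map_one, one_mul]
      rcases h with h | h
      · exact Or.inl h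
      · exact Or.inr (Or.inl h)
    · rcases h with h | h
      · subst h; rw [mul_one]; exact Or.inr (Or.inr (RW.sr a ha))
      · exact Or.inr (Or.inr (RW.cr a ha w' h))
  induction w using Monoid.Coprod.induction_on' with
  | one => exact Or.inl rfl
  | inl_mul a x ih =>
    rcases ih with h | h | h
    · exact consl a x (Or.inl h)
    · obtain ⟨a', w', rfl, h'⟩ := RW_true_cases x h
      rw [← mul_assoc, ← map_mul]
      exact consl _ _ h'
    · exact consl a x (Or.inr h)
  | inr_mul a x ih =>
    rcases ih with h | h | h
    · exact consr a x (Or.inl h)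
    · exact consr a x (Or.inr h)
    · obtain ⟨a', w', rfl, h'⟩ := RW_false_cases x h
      rw [← mul_assoc, ← map_mul]
      exact consr _ _ h'

lemma RW_bound {G H : Type*} [Group G] [Group H] {D : ℕ} (p q : Fin D)
    (ρ₁ : G →* Matrix.SpecialLinearGroup (Fin D) ℝ) (ρ₂ : H →* Matrix.SpecialLinearGroup (Fin D) ℝ)
    (ℓ₁ : G → ℕ) (ℓ₂ : H → ℕ) (ε : ℝ) (hε : 0 ≤ ε) (h₁ : PP ρ₁ ℓ₁ ε p q) (h₂ : PP ρ₂ ℓ₂ ε q p)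
    (ℓ : Monoid.Coprod G H → ℕ) (hℓ : ∀ a b, ℓ (a * b) ≤ ℓ a + ℓ b)
    (hℓ₁ : ∀ a, ℓ (Monoid.Coprod.inl a) ≤ ℓ₁ a) (hℓ₂ : ∀ a, ℓ (Monoid.Coprod.inr a) ≤ ℓ₂ a)
    (s : Bool) (w : Monoid.Coprod G H) (hw : RW s w) :
    ∃ j, let y := (Monoid.Coprod.lift ρ₁ ρ₂ w : Matrix (Fin D) (Fin D) ℝ) *ᵥ Pi.single j 1
      (∀ i, |y i| ≤ |y (cond s p q)|) ∧ 2 * Real.exp (ε * ℓ w) ≤ |y (cond s p q)| := by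
  have hstart : ∀ j i : Fin D, |(Pi.single j 1 : Fin D → ℝ) i| ≤ |(Pi.single j 1 : Fin D → ℝ) j| := by
    intro j i
    by_cases h : i = j
    · rw [h]
    · simp [h]
  have hnum : ∀ (x y : ℕ) (z : ℕ) (u v : ℝ), z ≤ x + y → 2 * Real.exp (ε * y) ≤ u →
      2 * Real.exp (ε * x) * u ≤ v → 2 * Real.exp (ε * z) ≤ v := by
    intro x y z u v hz hu hv
    have hz' : (z : ℝ) ≤ x + y := by exact_mod_cast hz
    have e1 : Real.exp (ε * z) ≤ Real.exp (ε * x) * Real.exp (ε * y) := by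
      rw [← Real.exp_add, Real.exp_le_exp, ← mul_add]
      gcongr
    have e2 := Real.exp_pos (ε * x)
    have e3 := Real.exp_pos (ε * y)
    have e4 := mul_pos e2 e3
    have e5 : Real.exp (ε * x) * (2 * Real.exp (ε * y)) ≤ Real.exp (ε * x) * u := by gcongr
    linarith
  have hmono : ∀ (x z : ℕ) (v : ℝ), z ≤ x →
      2 * Real.exp (ε * x) * 1 ≤ v → 2 * Real.exp (ε * z) ≤ v := by
    intro x z v hz hv
    have hz' : (z : ℝ) ≤ x := by exact_mod_cast hz
    refine le_trans ?_ hv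
    rw [mul_one]
    gcongr
  induction hw with
  | sl a ha =>
    refine ⟨q, ?_⟩
    have h := h₁ a ha _ (hstart q)
    simp only [Monoid.Coprod.lift_apply_inl, cond_true]
    refine ⟨h.1, hmono _ _ _ (hℓ₁ a) ?_⟩
    simpa using h.2
  | sr a ha =>
    refine ⟨p, ?_⟩
    have h := h₂ a ha _ (hstart p)
    simp only [Monoid.Coprod.lift_apply_inr, cond_false]
    refine ⟨h.1, hmono _ _ _ (hℓ₂ a) ?_⟩
    simpa using h.2
  | cl a ha w hw ih =>
    obtain ⟨j, hj1, hj2⟩ := ih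
    refine ⟨j, ?_⟩
    have h := h₁ a ha _ hj1
    simp only [map_mul, Monoid.Coprod.lift_apply_inl, cond_true, Matrix.SpecialLinearGroup.coe_mul,
      ← Matrix.mulVec_mulVec]
    exact ⟨h.1, hnum _ _ _ _ _ ((hℓ _ _).trans (Nat.add_le_add_right (hℓ₁ a) _)) hj2 h.2⟩
  | cr a ha w hw ih =>
    obtain ⟨j, hj1, hj2⟩ := ih
    refine ⟨j, ?_⟩
    have h := h₂ a ha _ hj1
    simp only [map_mul, Monoid.Coprod.lift_apply_inr, cond_false, Matrix.SpecialLinearGroup.coe_mul,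
      ← Matrix.mulVec_mulVec]
    exact ⟨h.1, hnum _ _ _ _ _ ((hℓ _ _).trans (Nat.add_le_add_right (hℓ₂ a) _)) hj2 h.2⟩

lemma entry_bound {G H : Type*} [Group G] [Group H] {D : ℕ} (p q : Fin D)
    (ρ₁ : G →* Matrix.SpecialLinearGroup (Fin D) ℝ) (ρ₂ : H →* Matrix.SpecialLinearGroup (Fin D) ℝ)
    (ℓ₁ : G → ℕ) (ℓ₂ : H → ℕ) (ε : ℝ) (hε : 0 ≤ ε) (h₁ : PP ρ₁ ℓ₁ ε p q) (h₂ : PP ρ₂ ℓ₂ ε q p)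
    (ℓ : Monoid.Coprod G H → ℕ) (hℓ : ∀ a b, ℓ (a * b) ≤ ℓ a + ℓ b)
    (hℓ₁ : ∀ a, ℓ (Monoid.Coprod.inl a) ≤ ℓ₁ a) (hℓ₂ : ∀ a, ℓ (Monoid.Coprod.inr a) ≤ ℓ₂ a)
    (w : Monoid.Coprod G H) (hw : w ≠ 1) :
    ∃ i j, 2 * Real.exp (ε * ℓ w) ≤
      |(Monoid.Coprod.lift ρ₁ ρ₂ w : Matrix (Fin D) (Fin D) ℝ) i j| := by
  have : ∃ s, RW s w := by
    rcases RW_exists w with h | h | h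
    · exact absurd h hw
    · exact ⟨_, h⟩
    · exact ⟨_, h⟩
  obtain ⟨s, hs⟩ := this
  obtain ⟨j, -, hj⟩ := RW_bound p q ρ₁ ρ₂ ℓ₁ ℓ₂ ε hε h₁ h₂ ℓ hℓ hℓ₁ hℓ₂ s w hs
  exact ⟨_, j, by simpa using hj⟩

/-- Upper bound for the Frobenius norm of products. -/
lemma fs_upper {G : Type*} [Group G] {D : ℕ} (ρ : G →* Matrix.SpecialLinearGroup (Fin D) ℝ)
    (T : Finset G) (hT : Subgroup.closure (T : Set G) = ⊤) :
    ∃ B : ℝ, 1 ≤ B ∧ ∀ w, fs (ρ w : Matrix (Fin D) (Fin D) ℝ) ≤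
      D * B ^ wordLength (T : Set G) w := by
  set B : ℝ := 1 + ∑ x ∈ T, (fs (ρ x : Matrix (Fin D) (Fin D) ℝ)
    + fs (ρ x⁻¹ : Matrix (Fin D) (Fin D) ℝ)) with hB
  have hnn : ∀ x ∈ T, 0 ≤ (fs (ρ x : Matrix (Fin D) (Fin D) ℝ)
    + fs (ρ x⁻¹ : Matrix (Fin D) (Fin D) ℝ)) := fun x _ => add_nonneg (fs_nonneg _) (fs_nonneg _)
  have hB1 : 1 ≤ B := by linarith [Finset.sum_nonneg hnn]
  have hgen : ∀ g : G, (g ∈ (T : Set G) ∨ g⁻¹ ∈ (T : Set G)) →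
      fs (ρ g : Matrix (Fin D) (Fin D) ℝ) ≤ B := by
    intro g hg
    rcases hg with h | h
    · have := Finset.single_le_sum hnn h
      have h2 := fs_nonneg (ρ g⁻¹ : Matrix (Fin D) (Fin D) ℝ)
      linarith
    · have := Finset.single_le_sum hnn h
      rw [inv_inv] at this
      have h2 := fs_nonneg (ρ g⁻¹ : Matrix (Fin D) (Fin D) ℝ)
      linarith
  refine ⟨B, hB1, fun w => ?_⟩
  obtain ⟨l, h1, h2, h3⟩ := wl_exists (T : Set G) w (by rw [hT]; trivial)
  rw [← h1, ← h3]
  clear h1 h3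
  induction l with
  | nil => simp [fs_one]
  | cons a l ih =>
    have ih' := ih fun g hg => h2 g (List.mem_cons_of_mem _ hg)
    have ha := hgen a (h2 a List.mem_cons_self)
    rw [List.prod_cons, map_mul, Matrix.SpecialLinearGroup.coe_mul, List.length_cons, pow_succ]
    calc _ ≤ _ := fs_mul _ _
      _ ≤ B * (D * B ^ l.length) := mul_le_mul ha ih' (fs_nonneg _) (by linarith)
      _ = _ := by ring


lemma pad_injective {m : Type*} [Fintype m] [DecidableEq m] (k : Type*) [Fintype k]
    [DecidableEq k] : Function.Injective (pad k (m := m)) := by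
  intro a b h
  have h1 : fromBlocks (a : Matrix m m ℝ) 0 0 (1 : Matrix k k ℝ)
      = fromBlocks (b : Matrix m m ℝ) 0 0 1 := congrArg Subtype.val h
  exact Subtype.ext (fromBlocks_inj.1 h1).1

lemma pad_growth {m : Type*} [Fintype m] [DecidableEq m] {k : Type*} [Fintype k]
    [DecidableEq k] (K K' : ℝ) (hK : 1 ≤ K) (a : Matrix.SpecialLinearGroup m ℝ)
    (b : Matrix.SpecialLinearGroup (m ⊕ k) ℝ) (hb : b = pad k a) :
    K * Real.log (1 + fs (a : Matrix m m ℝ)) + K' ≤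
      K * Real.log (1 + fs (b : Matrix (m ⊕ k) (m ⊕ k) ℝ)) + K' := by
  have h1 : (b : Matrix (m ⊕ k) (m ⊕ k) ℝ) = fromBlocks (a : Matrix m m ℝ) 0 0 1 := by
    rw [hb]; rfl
  have h2 : fs (b : Matrix (m ⊕ k) (m ⊕ k) ℝ) = fs (a : Matrix m m ℝ) + Fintype.card k := by
    rw [h1, fs_fromBlocks, fs_one]; simp
  have h0 := fs_nonneg (a : Matrix m m ℝ)
  have hk : (0 : ℝ) ≤ Fintype.card k := by positivity
  have h3 : Real.log (1 + fs (a : Matrix m m ℝ)) ≤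
      Real.log (1 + fs (b : Matrix (m ⊕ k) (m ⊕ k) ℝ)) :=
    Real.log_le_log (by linarith) (by rw [h2]; linarith)
  have := mul_le_mul_of_nonneg_left h3 (by linarith : 0 ≤ K)
  linarith

lemma growth_bound {d : ℕ} (L C : ℝ) (hL : 1 ≤ L) (a : Matrix.SpecialLinearGroup (Fin d) ℝ)
    (n : ℕ) (h : (1 / L) * n - C ≤ cartanNorm (a : Matrix (Fin d) (Fin d) ℝ))
    (M : ℝ) (hM : L * (d : ℝ) ^ 2 ≤ M) :
    (n : ℝ) ≤ M * Real.log (1 + fs (a : Matrix (Fin d) (Fin d) ℝ)) + L * C := by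
  have h1 := cartan_le (a : Matrix (Fin d) (Fin d) ℝ) a.2
  have hX : 0 ≤ Real.log (1 + fs (a : Matrix (Fin d) (Fin d) ℝ)) :=
    Real.log_nonneg (by linarith [fs_nonneg (a : Matrix (Fin d) (Fin d) ℝ)])
  have hL0 : 0 < L := by linarith
  have h2 : (1 / L) * n ≤ (d : ℝ) ^ 2 * Real.log (1 + fs (a : Matrix (Fin d) (Fin d) ℝ)) + C := by
    linarith
  have h3 := mul_le_mul_of_nonneg_left h2 hL0.le
  have h4 : L * (1 / L * n) = n := by field_simp
  have h5 := mul_le_mul_of_nonneg_right hM hX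
  rw [h4] at h3
  linarith

lemma gen_mem {G H : Type*} [Group G] [Group H] (S : Set G) (Γ : Subgroup G)
    (hΓ : Subgroup.closure S = Γ) (φ : Γ →* H) (T : Set H)
    (hT : ∀ g : Γ, (g : G) ∈ S → φ g ∈ T) (g : Γ) : φ g ∈ Subgroup.closure T := by
  subst hΓ
  obtain ⟨g, hg⟩ := g
  induction hg using Subgroup.closure_induction with
  | mem x hx => exact Subgroup.subset_closure (hT _ hx)
  | one => 
    have : (⟨1, Subgroup.one_mem _⟩ : Subgroup.closure S) = 1 := rfl
    rw [this, map_one]; exact Subgroup.one_mem _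
  | mul x y hx hy h1 h2 =>
    have : (⟨x * y, Subgroup.mul_mem _ hx hy⟩ : Subgroup.closure S) = ⟨x, hx⟩ * ⟨y, hy⟩ := rfl
    rw [this, map_mul]; exact Subgroup.mul_mem _ h1 h2
  | inv x hx h1 =>
    have : (⟨x⁻¹, Subgroup.inv_mem _ hx⟩ : Subgroup.closure S) = ⟨x, hx⟩⁻¹ := rfl
    rw [this, map_inv]; exact Subgroup.inv_mem _ h1

lemma exists_PP_gen {G m : Type*} [Group G] [Fintype m] [DecidableEq m] (i₀ : m)
    (Γ : Subgroup G) (S : Set G) (hSf : S.Finite) (hS : Subgroup.closure S = Γ)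
    (τ : G →* Matrix.SpecialLinearGroup m ℝ) (hτ : Function.Injective τ)
    (K K' : ℝ) (hK : 1 ≤ K) (hK' : 0 ≤ K')
    (hℓ : ∀ g : G, g ∈ Γ → (wordLength S g : ℝ) ≤
        K * Real.log (1 + fs (τ g : Matrix m m ℝ)) + K') (D : ℕ)
    (hD : Fintype.card ((m ⊕ m) × (m ⊕ m)) = D) (p q : Fin D) (hpq : p ≠ q) :
    ∃ ρ : Γ →* Matrix.SpecialLinearGroup (Fin D) ℝ, PP ρ
      (fun g : Γ => wordLength S (g : G)) (1 / K) p q := by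
  have hinj : Function.Injective (τ.comp Γ.subtype) := by
    rw [MonoidHom.coe_comp]
    exact hτ.comp Subtype.val_injective
  exact exists_PP i₀ (τ.comp Γ.subtype) hinj (fun g : Γ => wordLength S (g : G)) K K' hK hK'
    (fun g => hℓ g.1 g.2) (ball_finite S hSf Γ hS) D hD p q hpq

lemma exists_PP_sub {d : ℕ} (Γ : Subgroup (Matrix.SpecialLinearGroup (Fin d) ℝ))
    (S : Set (Matrix.SpecialLinearGroup (Fin d) ℝ)) (hSf : S.Finite)
    (hS : Subgroup.closure S = Γ)
    (K K' : ℝ) (hK : 1 ≤ K) (hK' : 0 ≤ K')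
    (hℓ : ∀ g : Matrix.SpecialLinearGroup (Fin d) ℝ, g ∈ Γ → (wordLength S g : ℝ) ≤
        K * Real.log (1 + fs (g : Matrix (Fin d) (Fin d) ℝ)) + K') (k D : ℕ)
    (hD : Fintype.card (((Fin d ⊕ Fin (k + 1)) ⊕ (Fin d ⊕ Fin (k + 1))) ×
        ((Fin d ⊕ Fin (k + 1)) ⊕ (Fin d ⊕ Fin (k + 1)))) = D) (p q : Fin D) (hpq : p ≠ q) :
    ∃ ρ : Γ →* Matrix.SpecialLinearGroup (Fin D) ℝ, PP ρ
      (fun g : Γ => wordLength S (g : Matrix.SpecialLinearGroup (Fin d) ℝ))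
      (1 / K) p q :=
  exists_PP_gen (Sum.inr 0) Γ S hSf hS (pad (Fin (k + 1))) (pad_injective _) K K' hK hK'
    (fun g hg => (hℓ g hg).trans (pad_growth K K' hK g _ rfl)) D hD p q hpq


lemma combine {G H : Type*} [Group G] [Group H] (Γ₁ : Subgroup G) (Γ₂ : Subgroup H)
    (S₁ : Finset G) (S₂ : Finset H) (hS₁ : Subgroup.closure (S₁ : Set G) = Γ₁)
    (hS₂ : Subgroup.closure (S₂ : Set H) = Γ₂) {D : ℕ} (hD2 : 2 ≤ D) (p q : Fin D)
    (K : ℝ) (hK : 1 ≤ K)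
    (ρ₁ : Γ₁ →* Matrix.SpecialLinearGroup (Fin D) ℝ)
    (ρ₂ : Γ₂ →* Matrix.SpecialLinearGroup (Fin D) ℝ)
    (hρ₁ : PP ρ₁ (fun g : Γ₁ => wordLength (S₁ : Set G) (g : G)) (1 / K) p q)
    (hρ₂ : PP ρ₂ (fun g : Γ₂ => wordLength (S₂ : Set H) (g : H)) (1 / K) q p) :
    ∃ (d : ℕ) (ρ : Monoid.Coprod Γ₁ Γ₂ →* Matrix.SpecialLinearGroup (Fin d) ℝ),
      Function.Injective ρ ∧
      ∃ (T : Finset (Monoid.Coprod Γ₁ Γ₂)),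
        Subgroup.closure (T : Set (Monoid.Coprod Γ₁ Γ₂)) = ⊤ ∧
        ∃ L' C' : ℝ, 1 ≤ L' ∧ 0 ≤ C' ∧
          ∀ w : Monoid.Coprod Γ₁ Γ₂,
            (1 / L') * (wordLength (T : Set (Monoid.Coprod Γ₁ Γ₂)) w) - C' ≤
                cartanNorm ((ρ w : Matrix (Fin d) (Fin d) ℝ)) ∧
              cartanNorm ((ρ w : Matrix (Fin d) (Fin d) ℝ)) ≤
                L' * (wordLength (T : Set (Monoid.Coprod Γ₁ Γ₂)) w) + C' := by
  classical
  -- the generating set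
  have hm₁ : ∀ x ∈ S₁, x ∈ Γ₁ := fun x hx => hS₁ ▸ Subgroup.subset_closure hx
  have hm₂ : ∀ x ∈ S₂, x ∈ Γ₂ := fun x hx => hS₂ ▸ Subgroup.subset_closure hx
  let T : Finset (Monoid.Coprod Γ₁ Γ₂) :=
    (S₁.attach.image fun x => Monoid.Coprod.inl (⟨x.1, hm₁ x.1 x.2⟩ : Γ₁)) ∪
    (S₂.attach.image fun x => Monoid.Coprod.inr (⟨x.1, hm₂ x.1 x.2⟩ : Γ₂))
  have hT₁ : ∀ g : Γ₁, (g : G) ∈ (S₁ : Set G) →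
      (Monoid.Coprod.inl g : Monoid.Coprod Γ₁ Γ₂) ∈ (T : Set (Monoid.Coprod Γ₁ Γ₂)) := by
    intro g hg
    refine Finset.mem_coe.2 (Finset.mem_union_left _ (Finset.mem_image.2
      ⟨⟨g.1, hg⟩, Finset.mem_attach _ _, rfl⟩))
  have hT₂ : ∀ g : Γ₂, (g : H) ∈ (S₂ : Set H) →
      (Monoid.Coprod.inr g : Monoid.Coprod Γ₁ Γ₂) ∈ (T : Set (Monoid.Coprod Γ₁ Γ₂)) := by
    intro g hg
    refine Finset.mem_coe.2 (Finset.mem_union_right _ (Finset.mem_image.2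
      ⟨⟨g.1, hg⟩, Finset.mem_attach _ _, rfl⟩))
  have hTtop : Subgroup.closure (T : Set (Monoid.Coprod Γ₁ Γ₂)) = ⊤ := by
    rw [eq_top_iff]
    intro w _
    induction w using Monoid.Coprod.induction_on' with
    | one => exact Subgroup.one_mem _
    | inl_mul a x ih =>
      exact Subgroup.mul_mem _ (gen_mem _ Γ₁ hS₁ (Monoid.Coprod.inl : Γ₁ →* Monoid.Coprod Γ₁ Γ₂) _ hT₁ a) (ih trivial)
    | inr_mul a x ih =>
      exact Subgroup.mul_mem _ (gen_mem _ Γ₂ hS₂ (Monoid.Coprod.inr : Γ₂ →* Monoid.Coprod Γ₁ Γ₂) _ hT₂ a) (ih trivial)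
  set ρ := Monoid.Coprod.lift ρ₁ ρ₂ with hρ
  have hK0 : 0 < K := by linarith
  have hent : ∀ w : Monoid.Coprod Γ₁ Γ₂, w ≠ 1 → ∃ i j,
      2 * Real.exp (1 / K * wordLength (T : Set (Monoid.Coprod Γ₁ Γ₂)) w) ≤ |(ρ w : Matrix (Fin D) (Fin D) ℝ) i j| :=
    fun w hw => entry_bound p q ρ₁ ρ₂ _ _ (1 / K) (by positivity) hρ₁ hρ₂
      (fun w => wordLength (T : Set (Monoid.Coprod Γ₁ Γ₂)) w) (wl_mul _ hTtop)
      (fun a => wl_map _ Γ₁ hS₁ (Monoid.Coprod.inl : Γ₁ →* Monoid.Coprod Γ₁ Γ₂) _ hT₁ a)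
      (fun a => wl_map _ Γ₂ hS₂ (Monoid.Coprod.inr : Γ₂ →* Monoid.Coprod Γ₁ Γ₂) _ hT₂ a) w hw
  refine ⟨D, ρ, ?_, T, hTtop, ?_⟩
  · rw [injective_iff_map_eq_one]
    intro w hw
    by_contra hne
    obtain ⟨i, j, hij⟩ := hent w hne
    rw [hw, Matrix.SpecialLinearGroup.coe_one] at hij
    have h1 : |(1 : Matrix (Fin D) (Fin D) ℝ) i j| ≤ 1 := by
      rw [Matrix.one_apply]; split_ifs <;> simp
    have h2 : 1 ≤ Real.exp (1 / K * wordLength (T : Set (Monoid.Coprod Γ₁ Γ₂)) w) := Real.one_le_exp (by positivity)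
    linarith
  obtain ⟨B, hB, hup⟩ := fs_upper ρ T hTtop
  have hlB : 0 ≤ Real.log B := Real.log_nonneg hB
  have hD0 : (0 : ℝ) < D := by exact_mod_cast (by omega : 0 < D)
  have hlD : 0 ≤ Real.log (1 + D) := Real.log_nonneg (by linarith)
  refine ⟨K + (D : ℝ) ^ 2 * Real.log B, ((D : ℝ) ^ 2 + 1) * Real.log (1 + D),
    by nlinarith [mul_nonneg (sq_nonneg (D : ℝ)) hlB], by positivity, fun w => ?_⟩
  set n : ℕ := wordLength (T : Set (Monoid.Coprod Γ₁ Γ₂)) w with hn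
  have hdet : (ρ w : Matrix (Fin D) (Fin D) ℝ).det = 1 := (ρ w).2
  constructor
  · have hcn : 0 ≤ cartanNorm (ρ w : Matrix (Fin D) (Fin D) ℝ) := Real.sqrt_nonneg _
    by_cases hw : w = 1
    · have hn0 : n = 0 := by rw [hn, hw, wl_one]
      rw [hn0]
      have : 0 ≤ ((D : ℝ) ^ 2 + 1) * Real.log (1 + D) := by positivity
      simp only [Nat.cast_zero, mul_zero]
      linarith
    obtain ⟨i, j, hij⟩ := hent w hw
    have h1 := sq_le_fs (ρ w : Matrix (Fin D) (Fin D) ℝ) i j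
    have h2 := fs_le_cartan (ρ w : Matrix (Fin D) (Fin D) ℝ) hdet
    have h3 : Real.exp (2 * (1 / K * n)) ≤
        Real.exp (Real.log (1 + D) + 2 * cartanNorm (ρ w : Matrix (Fin D) (Fin D) ℝ)) := by
      rw [Real.exp_add, Real.exp_log (by linarith)]
      have e1 : Real.exp (2 * (1 / K * n)) = Real.exp (1 / K * n) ^ 2 := by
        rw [← Real.exp_nat_mul]; norm_num
      have e2 := Real.exp_pos (1 / K * n)
      have e3 : Real.exp (1 / K * n) ^ 2 ≤ |(ρ w : Matrix (Fin D) (Fin D) ℝ) i j| ^ 2 := by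
        apply pow_le_pow_left₀ e2.le
        linarith
      rw [sq_abs] at e3
      have e4 := Real.exp_pos (2 * cartanNorm (ρ w : Matrix (Fin D) (Fin D) ℝ))
      rw [e1]
      linarith
    rw [Real.exp_le_exp] at h3
    have h4 : 1 / (K + (D : ℝ) ^ 2 * Real.log B) ≤ 1 / K := by
      apply one_div_le_one_div_of_le hK0
      have : 0 ≤ (D : ℝ) ^ 2 * Real.log B := by positivity
      linarith
    have h5 : 1 / (K + (D : ℝ) ^ 2 * Real.log B) * n ≤ 1 / K * n := by gcongr
    have h6 : Real.log (1 + D) ≤ ((D : ℝ) ^ 2 + 1) * Real.log (1 + D) := by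
      nlinarith [mul_nonneg (sq_nonneg (D : ℝ)) hlD]
    linarith
  · have h1 := cartan_le (ρ w : Matrix (Fin D) (Fin D) ℝ) hdet
    have h2 : Real.log (1 + fs (ρ w : Matrix (Fin D) (Fin D) ℝ)) ≤
        Real.log (1 + D) + n * Real.log B := by
      rw [← Real.log_pow, ← Real.log_mul (by linarith) (by positivity)]
      apply Real.log_le_log (by linarith [fs_nonneg (ρ w : Matrix (Fin D) (Fin D) ℝ)])
      have h3 := hup w
      have h4 : 1 ≤ B ^ n := one_le_pow₀ hB
      rw [← hn] at h3
      linarith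
    have h3 : (D : ℝ) ^ 2 * Real.log (1 + fs (ρ w : Matrix (Fin D) (Fin D) ℝ)) ≤
        (D : ℝ) ^ 2 * (Real.log (1 + D) + n * Real.log B) := by gcongr
    have h4 : 0 ≤ K * (n : ℝ) := by positivity
    nlinarith


/-- **Tsouvalas–Weisman**: if `Γ₁ ≤ SL(d₁, ℝ)` and `Γ₂ ≤ SL(d₂, ℝ)` are finitely generated
and quasi-isometrically embedded, then the free product `Γ₁ * Γ₂` admits a quasi-isometric
embedding into `SL(d, ℝ)` for some `d`. -/
theorem free_product_qi_embedding
    (d₁ d₂ : ℕ)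
    (Γ₁ : Subgroup (Matrix.SpecialLinearGroup (Fin d₁) ℝ))
    (Γ₂ : Subgroup (Matrix.SpecialLinearGroup (Fin d₂) ℝ))
    (S₁ : Finset (Matrix.SpecialLinearGroup (Fin d₁) ℝ))
    (S₂ : Finset (Matrix.SpecialLinearGroup (Fin d₂) ℝ))
    (hS₁ : Subgroup.closure (S₁ : Set (Matrix.SpecialLinearGroup (Fin d₁) ℝ)) = Γ₁)
    (hS₂ : Subgroup.closure (S₂ : Set (Matrix.SpecialLinearGroup (Fin d₂) ℝ)) = Γ₂)
    (L C : ℝ) (hL : 1 ≤ L) (hC : 0 ≤ C)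
    (hqi₁ : ∀ γ ∈ Γ₁,
      (1 / L) * (wordLength (S₁ : Set _) γ) - C ≤ cartanNorm (γ : Matrix (Fin d₁) (Fin d₁) ℝ) ∧
      cartanNorm (γ : Matrix (Fin d₁) (Fin d₁) ℝ) ≤ L * (wordLength (S₁ : Set _) γ) + C)
    (hqi₂ : ∀ γ ∈ Γ₂,
      (1 / L) * (wordLength (S₂ : Set _) γ) - C ≤ cartanNorm (γ : Matrix (Fin d₂) (Fin d₂) ℝ) ∧
      cartanNorm (γ : Matrix (Fin d₂) (Fin d₂) ℝ) ≤ L * (wordLength (S₂ : Set _) γ) + C) :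
    ∃ (d : ℕ) (ρ : Monoid.Coprod Γ₁ Γ₂ →* Matrix.SpecialLinearGroup (Fin d) ℝ),
      Function.Injective ρ ∧
      ∃ (T : Finset (Monoid.Coprod Γ₁ Γ₂)),
        Subgroup.closure (T : Set (Monoid.Coprod Γ₁ Γ₂)) = ⊤ ∧
        ∃ L' C' : ℝ, 1 ≤ L' ∧ 0 ≤ C' ∧
          ∀ w : Monoid.Coprod Γ₁ Γ₂,
            (1 / L') * (wordLength (T : Set _) w) - C' ≤
                cartanNorm ((ρ w : Matrix (Fin d) (Fin d) ℝ)) ∧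
              cartanNorm ((ρ w : Matrix (Fin d) (Fin d) ℝ)) ≤
                L' * (wordLength (T : Set _) w) + C' := by
  classical
  obtain ⟨K, K', hK, hK', hℓ₁, hℓ₂⟩ : ∃ K K' : ℝ, 1 ≤ K ∧ 0 ≤ K' ∧
      (∀ g : Matrix.SpecialLinearGroup (Fin d₁) ℝ, g ∈ Γ₁ →
        (wordLength (S₁ : Set (Matrix.SpecialLinearGroup (Fin d₁) ℝ)) g : ℝ) ≤
        K * Real.log (1 + fs (g : Matrix (Fin d₁) (Fin d₁) ℝ)) + K') ∧
      (∀ g : Matrix.SpecialLinearGroup (Fin d₂) ℝ, g ∈ Γ₂ →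
        (wordLength (S₂ : Set (Matrix.SpecialLinearGroup (Fin d₂) ℝ)) g : ℝ) ≤
        K * Real.log (1 + fs (g : Matrix (Fin d₂) (Fin d₂) ℝ)) + K') := by
    refine ⟨L * ((d₁ : ℝ) ^ 2 + (d₂ : ℝ) ^ 2 + 1), L * C, ?_, by positivity, ?_, ?_⟩
    · nlinarith [sq_nonneg (d₁ : ℝ), sq_nonneg (d₂ : ℝ)]
    · intro g hg
      exact growth_bound L C hL g _ (hqi₁ g hg).1 _ (by nlinarith [sq_nonneg (d₂ : ℝ)])
    · intro g hg
      exact growth_bound L C hL g _ (hqi₂ g hg).1 _ (by nlinarith [sq_nonneg (d₁ : ℝ)])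
  obtain ⟨D, hD⟩ : ∃ D : ℕ, D = Fintype.card
      (((Fin d₁ ⊕ Fin (d₂ + 1)) ⊕ (Fin d₁ ⊕ Fin (d₂ + 1))) ×
        ((Fin d₁ ⊕ Fin (d₂ + 1)) ⊕ (Fin d₁ ⊕ Fin (d₂ + 1)))) := ⟨_, rfl⟩
  have hDeq : Fintype.card (((Fin d₂ ⊕ Fin (d₁ + 1)) ⊕ (Fin d₂ ⊕ Fin (d₁ + 1))) ×
    ((Fin d₂ ⊕ Fin (d₁ + 1)) ⊕ (Fin d₂ ⊕ Fin (d₁ + 1)))) = D := by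
    rw [hD]
    simp only [Fintype.card_prod, Fintype.card_sum, Fintype.card_fin]
    ring
  have hD2 : 2 ≤ D := by
    rw [hD]
    simp only [Fintype.card_prod, Fintype.card_sum, Fintype.card_fin]
    nlinarith
  let p : Fin D := ⟨0, by omega⟩
  let q : Fin D := ⟨1, by omega⟩
  have hpq : p ≠ q := by simp [p, q]
  obtain ⟨ρ₁, hρ₁⟩ := exists_PP_sub Γ₁ (S₁ : Set (Matrix.SpecialLinearGroup (Fin d₁) ℝ)) S₁.finite_toSet hS₁ K K' hK hK' hℓ₁ d₂ D hD.symm p q hpq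
  obtain ⟨ρ₂, hρ₂⟩ := exists_PP_sub Γ₂ (S₂ : Set (Matrix.SpecialLinearGroup (Fin d₂) ℝ)) S₂.finite_toSet hS₂ K K' hK hK' hℓ₂ d₁ D hDeq q p hpq.symm
  exact combine Γ₁ Γ₂ S₁ S₂ hS₁ hS₂ hD2 p q K hK ρ₁ ρ₂ hρ₁ hρ₂
end
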